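/- arXiv:1209.5813 — 6 statements merged into one kernel-verified Lean document; each statement's English description precedes it below -/
import Mathlib

section
/- Let φ : 𝔾_{a(r)} → U be a homomorphism of affine group schemes with comorphism φ* : k[U] → k[t]/(t^{p^r}). Let λ ≠ 0 be a T-weight and x ∈ k[U]_λ, and write φ*(x) = a₁t + a₂t² + ⋯ + a_{p^r−1}t^{p^r−1} with a_i ∈ k. If φ*(x) ≠ 0 and m is the largest integer with a_m ≠ 0, then m ≤ |ht_J(λ)|·p^{r−1}. -/
/-!
STATEMENT 2 (Lemma 2.4, `degree`):  `G` reductive over an algebraically closed field `k`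
of good characteristic `p`, `P` a parabolic with unipotent radical `U`.  We work with the
coordinate Hopf algebra `k[U] = k[Y_{α₁},…,Y_{α_n}]`, modelled as `MvPolynomial ι k` where
`ι` indexes the roots `Φ⁺ \ Φ_J⁺` of `U`; the generator `X i = Y_{α_i}` has `T`-weight
`-α_i`, so the weight space `k[U]_λ` is the weighted-homogeneous submodule for the weight
function `i ↦ -root i`.  The comultiplication `comul` of `k[U]` satisfies the counit laws
and the `T`-equivariance property (2) of the paper, recorded as hypotheses.  `𝔾_{a(r)}`
has coordinate algebra `k[t]/(t^{p^r})`, with comultiplication `ΔQ` and counit `εQ`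
induced from those of `k[t]`, and `ψ = φ*` is the comorphism of a group scheme
homomorphism `φ : 𝔾_{a(r)} → U`, i.e. a `k`-algebra map that is compatible with the
comultiplications and counits.

Claim: if `λ ≠ 0`, `x ∈ k[U]_λ`, and `φ*(x) = a₁ t + ⋯ + a_{p^r-1} t^{p^r-1} ≠ 0`
(write `q` for this representative of degree `< p^r`) and `m` is the largest index with
`a_m ≠ 0` (i.e. `m = q.natDegree`), then `m ≤ |ht_J(λ)| ⬝ p^{r-1}`.
-/

noncomputable section

open Polynomial MvPolynomial TensorProduct
open scoped TensorProduct

namespace Stmt2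

variable (k : Type) [Field k]

/-- The comultiplication of `k[t]`: `Δ t = t ⊗ 1 + 1 ⊗ t`. -/
def gaComul : Polynomial k →ₐ[k] Polynomial k ⊗[k] Polynomial k :=
  Polynomial.aeval (Polynomial.X ⊗ₜ[k] (1 : Polynomial k) + (1 : Polynomial k) ⊗ₜ[k] Polynomial.X)

/-- The counit of `k[t]`: evaluation at `0`. -/
def gaCounit : Polynomial k →ₐ[k] k := Polynomial.aeval 0

/-- The Hopf ideal `(t^m)` of `k[t]`. -/
def gaI (m : ℕ) : Ideal (Polynomial k) := Ideal.span {Polynomial.X ^ m}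

/-- The canonical projection `π : k[t] → k[t]/(t^m)`. -/
def gaπ (m : ℕ) : Polynomial k →ₐ[k] Polynomial k ⧸ gaI k m :=
  Ideal.Quotient.mkₐ k (gaI k m)

variable (ι Λ : Type) [AddCommGroup Λ]

/-- The `T`-weight space `k[U]_λ`:  `k[U] = k[Y_{α₁},…,Y_{α_n}]` with `Y_{α_i}` of weight
`-α_i`, so `k[U]_λ` is spanned by the monomials of total weight `λ` for the weight
function `i ↦ -root i`. -/
def wtSub (root : ι → Λ) (lam : Λ) : Submodule k (MvPolynomial ι k) :=
  MvPolynomial.weightedHomogeneousSubmodule k (fun i => - root i) lam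

/-- The counit (augmentation) of `k[U]`: evaluation at the identity of `U`, i.e. at the
point all of whose root coordinates are `0`. -/
def uCounit : MvPolynomial ι k →ₐ[k] k := MvPolynomial.aeval (fun _ : ι => (0 : k))

theorem lucas_aux (p : ℕ) (hp : p.Prime) (s : ℕ) : ∀ n : ℕ, Nat.choose n (p ^ s) ≡ n / p ^ s [MOD p] := by
  have : Fact p.Prime := ⟨hp⟩
  induction s with
  | zero => intro n; simp; rfl
  | succ s ih =>
    intro n
    have h := Choose.choose_modEq_choose_mod_mul_choose_div_nat (p := p) (n := n) (k := p ^ (s+1))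
    have h1 : p ^ (s+1) % p = 0 := by simp [pow_succ]
    have h2 : p ^ (s+1) / p = p ^ s := by
      rw [pow_succ]; exact Nat.mul_div_cancel _ hp.pos
    rw [h1, h2, Nat.choose_zero_right, one_mul] at h
    refine h.trans ((ih (n / p)).trans ?_)
    rw [Nat.div_div_eq_div_mul, pow_succ, mul_comm]

theorem choose_ne (k : Type) [Field k] (p r : ℕ) (hp : p.Prime) [CharP k p] (hr : 1 ≤ r) (m : ℕ)
    (h1 : p ^ (r-1) < m) (h2 : m < p ^ r) : (Nat.choose m (p ^ (r-1)) : k) ≠ 0 := by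
  intro h
  rw [CharP.cast_eq_zero_iff k p] at h
  have h3 := lucas_aux p hp (r-1) m
  have h4 : p ∣ m / p ^ (r-1) := (Nat.ModEq.dvd_iff h3 dvd_rfl).1 h
  have hpos : 0 < p ^ (r-1) := pow_pos hp.pos _
  have h5 : 0 < m / p ^ (r-1) := Nat.div_pos h1.le hpos
  have h6 : m / p ^ (r-1) < p := by
    rw [Nat.div_lt_iff_lt_mul hpos, mul_comm, ← pow_succ, Nat.sub_add_cancel hr]; exact h2
  exact absurd (Nat.le_of_dvd h5 h4) (by omega)

theorem exists_coeff (k : Type) [Field k] (N i : ℕ) (hi : i < N) :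
    ∃ c : (Polynomial k ⧸ gaI k N) →ₗ[k] k, ∀ f : Polynomial k, c (gaπ k N f) = f.coeff i := by
  have hle : (gaI k N).restrictScalars k ≤ LinearMap.ker (Polynomial.lcoeff k i) := by
    intro f hf
    rw [Submodule.restrictScalars_mem, gaI, Ideal.mem_span_singleton] at hf
    rw [LinearMap.mem_ker, Polynomial.lcoeff_apply]
    exact (Polynomial.X_pow_dvd_iff.1 hf) i hi
  refine ⟨(Submodule.liftQ _ _ hle).comp
    (Submodule.Quotient.restrictScalarsEquiv k (gaI k N)).symm.toLinearMap, fun f => ?_⟩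
  rfl

theorem coeff_comul (k : Type) [Field k] (N i j : ℕ)
    (ci cj : (Polynomial k ⧸ gaI k N) →ₗ[k] k)
    (hci : ∀ f : Polynomial k, ci (gaπ k N f) = f.coeff i)
    (hcj : ∀ f : Polynomial k, cj (gaπ k N f) = f.coeff j) (f : Polynomial k) :
    TensorProduct.lid k k (TensorProduct.map ci cj
      (Algebra.TensorProduct.map (gaπ k N) (gaπ k N) (gaComul k f))) =
      f.coeff (i + j) * (Nat.choose (i + j) i : k) := by
  induction f using Polynomial.induction_on' with
  | add f g hf hg => simp only [map_add, hf, hg, Polynomial.coeff_add, add_mul]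
  | monomial n a =>
    rw [← mul_one a, ← smul_eq_mul, ← Polynomial.smul_monomial, ← Polynomial.X_pow_eq_monomial]
    simp only [map_smul, map_pow]
    have : gaComul k Polynomial.X = Polynomial.X ⊗ₜ[k] (1 : Polynomial k) + (1 : Polynomial k) ⊗ₜ[k] Polynomial.X := by
      simp [gaComul]
    rw [← map_pow, this, add_pow]
    simp only [Algebra.TensorProduct.tmul_pow, Algebra.TensorProduct.tmul_mul_tmul, one_pow,
      mul_one, one_mul, map_sum, Polynomial.coeff_smul, Polynomial.coeff_X_pow]
    have key : ∀ a ∈ Finset.range (n+1), TensorProduct.lid k k (TensorProduct.map ci cj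
      (Algebra.TensorProduct.map (gaπ k N) (gaπ k N)
        (((Polynomial.X ^ a) ⊗ₜ[k] (Polynomial.X ^ (n - a)) : Polynomial k ⊗[k] Polynomial k) * ((n.choose a : ℕ) : Polynomial k ⊗[k] Polynomial k)))) =
        if a = i then (if i + j = n then (n.choose i : k) else 0) else 0 := by
      intro a ha
      rw [Finset.mem_range] at ha
      rw [mul_comm, ← nsmul_eq_mul]
      simp only [map_nsmul, Algebra.TensorProduct.map_tmul, TensorProduct.map_tmul, hci, hcj,
        TensorProduct.lid_tmul, Polynomial.coeff_X_pow, smul_eq_mul]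
      rw [nsmul_eq_mul]
      by_cases h1 : a = i
      · subst h1
        by_cases h2 : a + j = n
        · have : j = n - a := by omega
          rw [if_pos rfl, if_pos this, if_pos rfl, if_pos h2]; simp
        · have : ¬ j = n - a := by omega
          simp [h2, this]
      · simp [h1, Ne.symm h1]
    rw [Finset.sum_congr rfl key, Finset.sum_ite_eq']
    by_cases h2 : i + j = n
    · subst h2; simp
    · simp [h2]

theorem ht_mon (k : Type) [Field k] (ι Λ : Type) [AddCommGroup Λ] [Fintype ι]
    (root : ι → Λ) (htJ : Λ →+ ℤ) (hroot : ∀ i, 1 ≤ htJ (root i)) (lam : Λ)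
    (x : MvPolynomial ι k) (hx : x ∈ wtSub k ι Λ root lam) (d : ι →₀ ℕ) (hd : x.coeff d ≠ 0) :
    htJ lam ≤ 0 ∧ (htJ lam = 0 → d = 0) := by
  have h := (MvPolynomial.mem_weightedHomogeneousSubmodule _ _ _ _).1 hx hd
  rw [Finsupp.weight_apply, Finsupp.sum_fintype _ _ (by simp)] at h
  have h' : htJ lam = - ∑ i, (d i : ℤ) * htJ (root i) := by
    rw [← h]; simp
  have hn : ∀ i ∈ Finset.univ, 0 ≤ (d i : ℤ) * htJ (root i) := fun i _ =>
    mul_nonneg (by positivity) (by linarith [hroot i])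
  refine ⟨by rw [h']; simpa using Finset.sum_nonneg hn, fun h0 => ?_⟩
  rw [h', neg_eq_zero, Finset.sum_eq_zero_iff_of_nonneg hn] at h0
  ext i
  have := h0 i (Finset.mem_univ i)
  have h1 := hroot i
  rcases mul_eq_zero.1 this with h2 | h2
  · exact_mod_cast h2
  · omega

theorem stmt_2 [IsAlgClosed k] (p r : ℕ) (hp : p.Prime) [CharP k p] (hr : 1 ≤ r)
    [Fintype ι]
    -- the roots `α_i` of `U`, and the function `ht_J`, positive on roots of `U`
    (root : ι → Λ) (htJ : Λ →+ ℤ) (hroot : ∀ i, 1 ≤ htJ (root i))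
    -- the comultiplication of `k[U]`, its counit laws ...
    (comul : MvPolynomial ι k →ₐ[k] MvPolynomial ι k ⊗[k] MvPolynomial ι k)
    (hcul : ∀ f, (TensorProduct.lid k (MvPolynomial ι k))
        ((TensorProduct.map (uCounit k ι).toLinearMap
          (LinearMap.id : MvPolynomial ι k →ₗ[k] MvPolynomial ι k)) (comul f)) = f)
    (hcur : ∀ f, (TensorProduct.rid k (MvPolynomial ι k))
        ((TensorProduct.map (LinearMap.id : MvPolynomial ι k →ₗ[k] MvPolynomial ι k)
          (uCounit k ι).toLinearMap) (comul f)) = f)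
    -- ... and its `T`-equivariance: `Δ(k[U]_λ) ⊆ Σ_{λ₁+λ₂=λ} k[U]_{λ₁} ⊗ k[U]_{λ₂}`
    (hwt : ∀ (lam : Λ), ∀ x ∈ wtSub k ι Λ root lam,
        comul x ∈ ⨆ (pr : Λ × Λ) (_ : pr.1 + pr.2 = lam),
          LinearMap.range (TensorProduct.map (wtSub k ι Λ root pr.1).subtype
            (wtSub k ι Λ root pr.2).subtype))
    -- the induced comultiplication and counit of `k[t]/(t^{p^r})`
    (ΔQ : (Polynomial k ⧸ gaI k (p ^ r)) →ₐ[k]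
        (Polynomial k ⧸ gaI k (p ^ r)) ⊗[k] (Polynomial k ⧸ gaI k (p ^ r)))
    (hΔQ : ΔQ.comp (gaπ k (p ^ r)) =
        (Algebra.TensorProduct.map (gaπ k (p ^ r)) (gaπ k (p ^ r))).comp (gaComul k))
    (εQ : (Polynomial k ⧸ gaI k (p ^ r)) →ₐ[k] k)
    (hεQ : εQ.comp (gaπ k (p ^ r)) = gaCounit k)
    -- `ψ = φ*` is the comorphism of `φ : 𝔾_{a(r)} → U`: an algebra map compatible with
    -- comultiplication and counit
    (ψ : MvPolynomial ι k →ₐ[k] Polynomial k ⧸ gaI k (p ^ r))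
    (hψΔ : (Algebra.TensorProduct.map ψ ψ).comp comul = ΔQ.comp ψ)
    (hψε : εQ.comp ψ = uCounit k ι)
    -- the data of the claim
    (lam : Λ) (hlam : lam ≠ 0) (x : MvPolynomial ι k) (hx : x ∈ wtSub k ι Λ root lam)
    (q : Polynomial k) (hq : q ∈ Polynomial.degreeLT k (p ^ r))
    (hπq : gaπ k (p ^ r) q = ψ x) (hq0 : q ≠ 0) :
    q.natDegree ≤ (htJ lam).natAbs * p ^ (r - 1) := by
  classical
  have hπs : Function.Surjective (gaπ k (p ^ r)) := Ideal.Quotient.mk_surjective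
  choose! c hc using fun i => exists_coeff k (p ^ r) i
  have hpos : 0 < p ^ (r - 1) := pow_pos hp.pos _
  have main : ∀ n : ℕ, ∀ (lam : Λ), (htJ lam).natAbs = n → ∀ x ∈ wtSub k ι Λ root lam,
      ∀ i, i < p ^ r → n * p ^ (r - 1) < i → c i (ψ x) = 0 := by
    intro n
    induction n using Nat.strong_induction_on with
    | _ n ih =>
    intro lam hn x hx m hm hlt
    rcases Nat.eq_zero_or_pos n with h0 | h0
    · have hl : htJ lam = 0 := by omega
      have hxC : x = MvPolynomial.C (x.coeff 0) := by
        ext d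
        rw [MvPolynomial.coeff_C]
        split_ifs with hd
        · rw [hd]
        · by_contra hne
          exact hd ((ht_mon k ι Λ root htJ hroot lam x hx d hne).2 hl).symm
      have h1 : ψ x = gaπ k (p ^ r) (Polynomial.C (x.coeff 0)) := by
        rw [hxC, ← MvPolynomial.algebraMap_eq, AlgHom.commutes, MvPolynomial.algebraMap_eq,
          MvPolynomial.coeff_zero_C, ← Polynomial.algebraMap_eq, AlgHom.commutes]
      rw [h1, hc m hm, Polynomial.coeff_C, if_neg (by omega)]
    · have hm1 : p ^ (r - 1) < m := lt_of_le_of_lt (Nat.le_mul_of_pos_left _ h0) hlt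
      obtain ⟨f, hf⟩ := hπs (ψ x)
      obtain ⟨j, rfl⟩ : ∃ j, m = p ^ (r - 1) + j := ⟨m - p ^ (r - 1), by omega⟩
      have e1 := coeff_comul k (p ^ r) (p ^ (r - 1)) j _ _ (hc (p ^ (r - 1)) (by omega))
        (hc j (by omega)) f
      have e2 : Algebra.TensorProduct.map (gaπ k (p ^ r)) (gaπ k (p ^ r)) (gaComul k f)
          = Algebra.TensorProduct.map ψ ψ (comul x) := by
        have a1 := DFunLike.congr_fun hΔQ f
        have a2 := DFunLike.congr_fun hψΔ x
        simp only [AlgHom.comp_apply] at a1 a2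
        rw [← a1, hf, a2]
      set L : MvPolynomial ι k ⊗[k] MvPolynomial ι k →ₗ[k] k :=
        (TensorProduct.lid k k).toLinearMap ∘ₗ (TensorProduct.map (c (p ^ (r - 1))) (c j)) ∘ₗ
          (Algebra.TensorProduct.map ψ ψ).toLinearMap with hL
      have e3 : L (comul x) = 0 := by
        rw [← LinearMap.mem_ker]
        refine (iSup₂_le ?_ : _ ≤ LinearMap.ker L) (hwt lam x hx)
        rintro ⟨l1, l2⟩ hl
        rw [LinearMap.range_le_ker_iff]
        refine TensorProduct.ext' fun y z => ?_
        have hval : L ((y : MvPolynomial ι k) ⊗ₜ[k] (z : MvPolynomial ι k)) =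
            c (p ^ (r - 1)) (ψ y) * c j (ψ z) := by
          simp [hL]
        simp only [LinearMap.comp_apply, TensorProduct.map_tmul, Submodule.subtype_apply,
          LinearMap.zero_apply]
        rw [hval]
        by_cases hy : (y : MvPolynomial ι k) = 0
        · simp [hy]
        by_cases hz : (z : MvPolynomial ι k) = 0
        · simp [hz]
        obtain ⟨d, hd⟩ := MvPolynomial.ne_zero_iff.1 hy
        obtain ⟨e, he⟩ := MvPolynomial.ne_zero_iff.1 hz
        have t1 := (ht_mon k ι Λ root htJ hroot l1 y y.2 d hd).1
        have t2 := (ht_mon k ι Λ root htJ hroot l2 z z.2 e he).1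
        have t3 : htJ l1 + htJ l2 = htJ lam := by rw [← map_add]; exact congrArg htJ hl
        by_cases s1 : (htJ l1).natAbs = 0
        · rw [ih 0 h0 l1 s1 y y.2 _ (by omega) (by omega), zero_mul]
        by_cases s2 : (htJ l2).natAbs = 0
        · rw [ih 0 h0 l2 s2 z z.2 j (by omega) (by omega), mul_zero]
        have t4 : (htJ l1).natAbs + (htJ l2).natAbs = n := by omega
        by_cases s3 : (htJ l1).natAbs * p ^ (r - 1) < p ^ (r - 1)
        · rw [ih _ (by omega) l1 rfl y y.2 _ (by omega) s3, zero_mul]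
        · rw [ih _ (by omega) l2 rfl z z.2 j (by omega) ?_, mul_zero]
          rw [← t4, add_mul] at hlt
          omega
      have e4 : L (comul x) = f.coeff (p ^ (r - 1) + j) *
          (Nat.choose (p ^ (r - 1) + j) (p ^ (r - 1)) : k) := by
        rw [← e1, e2]; rfl
      rw [e3] at e4
      rw [← hf, hc _ hm]
      exact (mul_eq_zero.1 e4.symm).resolve_right (choose_ne k p r hp hr _ hm1 hm)
  by_contra! hcon
  have hdeg : q.natDegree < p ^ r := by
    rw [Polynomial.mem_degreeLT] at hq
    exact (Polynomial.natDegree_lt_iff_degree_lt hq0).2 hq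
  have := main _ lam rfl x hx q.natDegree hdeg hcon
  rw [← hπq, hc _ hdeg] at this
  exact hq0 (Polynomial.leadingCoeff_eq_zero.1 this)


end Stmt2
end
end

section
/- Let φ : 𝔾_{a(r)} → U be a homomorphism of affine group schemes with comorphism φ* : k[U] → k[t]/(t^{p^r}), and let φ*_Y : k[U] → k[t] be the lift of φ* with respect to the algebra generators Y = {Y_{α₁},…,Y_{α_n}}. Then for every T-weight λ and every x ∈ k[U]_λ, the polynomial φ*_Y(x) ∈ k[t] has degree at most |ht_J(λ)|·p^{r−1}. -/
/-!
STATEMENT 3 (consequence of Lemma 2.4 recorded in the proof of Lemma 2.6): with the same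
setting as Statement 2, let `φ*_Y : k[U] → k[t]` be the lift of the comorphism
`φ* : k[U] → k[t]/(t^{p^r})` with respect to the algebra generators
`Y = {Y_{α₁},…,Y_{α_n}}`, i.e. the `k`-algebra homomorphism `L` sending each generator
`X i = Y_{α_i}` to the unique polynomial of degree `< p^r` representing `φ*(X i)`.
Then for every weight `λ` and every `x ∈ k[U]_λ`, the polynomial `L x` has degree at
most `|ht_J(λ)| ⬝ p^{r-1}`.
-/


noncomputable section

open Polynomial MvPolynomial TensorProduct
open scoped TensorProduct

namespace Stmt3

variable (k : Type) [Field k]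

/-- The comultiplication of `k[t]`: `Δ t = t ⊗ 1 + 1 ⊗ t`. -/
def gaComul : Polynomial k →ₐ[k] Polynomial k ⊗[k] Polynomial k :=
  Polynomial.aeval (Polynomial.X ⊗ₜ[k] (1 : Polynomial k) + (1 : Polynomial k) ⊗ₜ[k] Polynomial.X)

/-- The counit of `k[t]`: evaluation at `0`. -/
def gaCounit : Polynomial k →ₐ[k] k := Polynomial.aeval 0

/-- The Hopf ideal `(t^m)` of `k[t]`. -/
def gaI (m : ℕ) : Ideal (Polynomial k) := Ideal.span {Polynomial.X ^ m}

/-- The canonical projection `π : k[t] → k[t]/(t^m)`. -/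
def gaπ (m : ℕ) : Polynomial k →ₐ[k] Polynomial k ⧸ gaI k m :=
  Ideal.Quotient.mkₐ k (gaI k m)

variable (ι Λ : Type) [AddCommGroup Λ]

/-- The `T`-weight space `k[U]_λ`:  `k[U] = k[Y_{α₁},…,Y_{α_n}]` with `Y_{α_i}` of weight
`-α_i`, so `k[U]_λ` is spanned by the monomials of total weight `λ` for the weight
function `i ↦ -root i`. -/
def wtSub (root : ι → Λ) (lam : Λ) : Submodule k (MvPolynomial ι k) :=
  MvPolynomial.weightedHomogeneousSubmodule k (fun i => - root i) lam

/-- The counit (augmentation) of `k[U]`: evaluation at the identity of `U`, i.e. at the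
point all of whose root coordinates are `0`. -/
def uCounit : MvPolynomial ι k →ₐ[k] k := MvPolynomial.aeval (fun _ : ι => (0 : k))

theorem coefQ (N j : ℕ) (hj : j < N) :
    ∃ c : (Polynomial k ⧸ gaI k N) →ₗ[k] k, ∀ f, c (gaπ k N f) = Polynomial.coeff f j := by
  refine ⟨Submodule.liftQ ((gaI k N).restrictScalars k) (Polynomial.lcoeff k j) ?_, ?_⟩
  · intro f hf
    have hf' : f ∈ gaI k N := hf
    rw [gaI, Ideal.mem_span_singleton, Polynomial.X_pow_dvd_iff] at hf'
    simpa using hf' j hj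
  · intro f
    rfl

theorem choose_pow_mod (p : ℕ) [Fact p.Prime] (m j : ℕ) :
    j.choose (p ^ m) ≡ j / p ^ m [MOD p] := by
  induction m generalizing j with
  | zero => simp [Nat.ModEq]
  | succ m ih =>
    have h := Choose.choose_modEq_choose_mod_mul_choose_div_nat (n := j) (k := p ^ (m+1)) (p := p)
    have hp : 0 < p := (Fact.out : p.Prime).pos
    have h1 : p ^ (m+1) % p = 0 := by rw [pow_succ]; simp
    have h2 : p ^ (m+1) / p = p ^ m := by rw [pow_succ]; exact Nat.mul_div_cancel _ hp
    rw [h1, h2, Nat.choose_zero_right, one_mul] at h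
    refine h.trans ((ih (j / p)).trans ?_)
    rw [Nat.div_div_eq_div_mul, pow_succ, mul_comm p]

theorem choose_pow_ne (p r j : ℕ) (hp : p.Prime) [CharP k p] (hr : 1 ≤ r)
    (h1 : p ^ (r-1) ≤ j) (h2 : j < p ^ r) : ((j.choose (p ^ (r-1)) : ℕ) : k) ≠ 0 := by
  have := Fact.mk hp
  intro h
  rw [CharP.cast_eq_zero_iff k p] at h
  have h3 := choose_pow_mod p (r-1) j
  have h4 : p ∣ j / p ^ (r-1) := (h3.dvd_iff dvd_rfl).1 h
  have h5 : 0 < j / p ^ (r-1) := Nat.div_pos h1 (pow_pos hp.pos _)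
  have h6 : j / p ^ (r-1) < p := by
    rw [Nat.div_lt_iff_lt_mul (pow_pos hp.pos _), ← pow_succ', Nat.sub_add_cancel hr]
    exact h2
  exact absurd (Nat.le_of_dvd h5 h4) (by omega)

theorem coef_comul (N a b : ℕ) (ca cb : (Polynomial k ⧸ gaI k N) →ₗ[k] k)
    (ha : ∀ f, ca (gaπ k N f) = Polynomial.coeff f a)
    (hb : ∀ f, cb (gaπ k N f) = Polynomial.coeff f b) (f : Polynomial k) :
    TensorProduct.lid k k (TensorProduct.map ca cb
      (Algebra.TensorProduct.map (gaπ k N) (gaπ k N) (gaComul k f))) =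
      ((a+b).choose a : k) * Polynomial.coeff f (a+b) := by
  induction f using Polynomial.induction_on' with
  | add f g hf hg => simp only [map_add, hf, hg, Polynomial.coeff_add, mul_add]
  | monomial n c =>
    have h : gaComul k (Polynomial.monomial n c) = c • ∑ m ∈ Finset.range (n+1),
        (n.choose m) • ((Polynomial.X ^ m : Polynomial k) ⊗ₜ[k] (Polynomial.X ^ (n-m) : Polynomial k)) := by
      rw [← Polynomial.C_mul_X_pow_eq_monomial, ← Polynomial.smul_eq_C_mul, map_smul, map_pow]
      simp only [gaComul, Polynomial.aeval_X]
      rw [add_pow]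
      congr 1
      refine Finset.sum_congr rfl fun m _ => ?_
      simp [Algebra.TensorProduct.tmul_pow, nsmul_eq_mul, mul_comm]
    rw [h]
    simp only [map_smul, map_sum, map_nsmul, Algebra.TensorProduct.map_tmul,
      TensorProduct.map_tmul, ha, hb, TensorProduct.lid_tmul, Polynomial.coeff_X_pow,
      Polynomial.coeff_monomial]
    simp only [smul_eq_mul, nsmul_eq_mul]
    by_cases hn : n = a + b
    · subst hn
      rw [Finset.sum_eq_single a]
      · simp [mul_comm]
      · intro m _ hm
        simp [Ne.symm hm]
      · simp
    · rw [if_neg hn, mul_zero, Finset.sum_eq_zero, mul_zero]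
      intro m hm
      have := Finset.mem_range.1 hm
      by_cases h1 : a = m
      · have h2 : ¬ b = n - m := by omega
        simp [h2]
      · simp [h1]

theorem ht_weight (root : ι → Λ) (htJ : Λ →+ ℤ) (d : ι →₀ ℕ) :
    htJ (Finsupp.weight (fun i => - root i) d) = - d.sum fun i n => (n : ℤ) * htJ (root i) := by
  rw [Finsupp.weight_apply, Finsupp.sum, map_sum, Finsupp.sum, ← Finset.sum_neg_distrib]
  refine Finset.sum_congr rfl fun i _ => ?_
  simp

theorem wt_const (root : ι → Λ) (htJ : Λ →+ ℤ) (hroot : ∀ i, 1 ≤ htJ (root i))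
    (lam : Λ) (h : 0 ≤ htJ lam) (x : MvPolynomial ι k) (hx : x ∈ wtSub k ι Λ root lam) :
    ∃ c : k, x = algebraMap k _ c := by
  classical
  refine ⟨x.coeff 0, ?_⟩
  rw [MvPolynomial.algebraMap_eq]
  ext d
  rw [MvPolynomial.coeff_C]
  split_ifs with hd
  · rw [hd]
  · by_contra hne
    have hw := hx hne
    have h2 := ht_weight ι Λ root htJ d
    rw [hw] at h2
    obtain ⟨i, hi⟩ := Finsupp.ne_iff.1 (Ne.symm hd)
    have h3 : 0 < d.sum fun i n => (n : ℤ) * htJ (root i) := by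
      refine Finset.sum_pos (fun i hi => ?_) ⟨i, by simpa using hi⟩
      have := hroot i
      have : 0 < d i := Nat.pos_of_ne_zero (by simpa using hi)
      positivity
    omega

theorem main_coef (p r : ℕ) (hp : p.Prime) [CharP k p] (hr : 1 ≤ r)
    (root : ι → Λ) (htJ : Λ →+ ℤ) (hroot : ∀ i, 1 ≤ htJ (root i))
    (comul : MvPolynomial ι k →ₐ[k] MvPolynomial ι k ⊗[k] MvPolynomial ι k)
    (hwt : ∀ (lam : Λ), ∀ x ∈ wtSub k ι Λ root lam,
        comul x ∈ ⨆ (pr : Λ × Λ) (_ : pr.1 + pr.2 = lam),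
          LinearMap.range (TensorProduct.map (wtSub k ι Λ root pr.1).subtype
            (wtSub k ι Λ root pr.2).subtype))
    (ΔQ : (Polynomial k ⧸ gaI k (p ^ r)) →ₐ[k]
        (Polynomial k ⧸ gaI k (p ^ r)) ⊗[k] (Polynomial k ⧸ gaI k (p ^ r)))
    (hΔQ : ΔQ.comp (gaπ k (p ^ r)) =
        (Algebra.TensorProduct.map (gaπ k (p ^ r)) (gaπ k (p ^ r))).comp (gaComul k))
    (ψ : MvPolynomial ι k →ₐ[k] Polynomial k ⧸ gaI k (p ^ r))
    (hψΔ : (Algebra.TensorProduct.map ψ ψ).comp comul = ΔQ.comp ψ) (n : ℕ) :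
    ∀ (lam : Λ), htJ lam = -(n : ℤ) → ∀ x ∈ wtSub k ι Λ root lam,
      ∀ f, gaπ k (p ^ r) f = ψ x → ∀ j, j < p ^ r → n * p ^ (r-1) < j → f.coeff j = 0 := by
  induction n using Nat.strong_induction_on with
  | _ n ih =>
  have hconst : ∀ (lam : Λ), 0 ≤ htJ lam → ∀ x ∈ wtSub k ι Λ root lam,
      ∀ j, j < p ^ r → 0 < j → ∀ c : (Polynomial k ⧸ gaI k (p ^ r)) →ₗ[k] k,
      (∀ f, c (gaπ k (p ^ r) f) = Polynomial.coeff f j) → c (ψ x) = 0 := by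
    intro lam hl x hx j hj hj0 c hc
    obtain ⟨e, rfl⟩ := wt_const k ι Λ root htJ hroot lam hl x hx
    rw [AlgHom.commutes, ← AlgHom.commutes (gaπ k (p ^ r)), hc, Polynomial.algebraMap_eq,
      Polynomial.coeff_C_of_ne_zero hj0.ne']
  intro lam hl x hx f hf j hj hnj
  obtain ⟨cj, hcj⟩ := coefQ k (p ^ r) j hj
  rcases Nat.eq_zero_or_pos n with hn | hn
  · rw [← hcj, hf]
    exact hconst lam (by omega) x hx j hj (by omega) cj hcj
  have hm0 : 0 < p ^ (r-1) := pow_pos hp.pos _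
  have hmj : p ^ (r-1) < j := lt_of_le_of_lt (Nat.le_mul_of_pos_left _ hn) hnj
  obtain ⟨b, rfl⟩ := Nat.exists_eq_add_of_lt hmj
  rw [add_assoc] at *
  set a := p ^ (r-1) with ha
  obtain ⟨ca, hca⟩ := coefQ k (p ^ r) a (by omega)
  obtain ⟨cb, hcb⟩ := coefQ k (p ^ r) (b+1) (by omega)
  have key := coef_comul k (p ^ r) a (b+1) ca cb hca hcb f
  have e1 := DFunLike.congr_fun hΔQ f
  have e2 := DFunLike.congr_fun hψΔ x
  simp only [AlgHom.comp_apply] at e1 e2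
  rw [← e1, hf, ← e2] at key
  have hz : ∀ z ∈ ⨆ (pr : Λ × Λ) (_ : pr.1 + pr.2 = lam),
          LinearMap.range (TensorProduct.map (wtSub k ι Λ root pr.1).subtype
            (wtSub k ι Λ root pr.2).subtype),
      z ∈ LinearMap.ker ((TensorProduct.lid k k).toLinearMap ∘ₗ (TensorProduct.map ca cb) ∘ₗ
        (Algebra.TensorProduct.map ψ ψ).toLinearMap) := by
    intro z hz
    refine (iSup₂_le ?_ : _ ≤ LinearMap.ker ((TensorProduct.lid k k).toLinearMap ∘ₗ
      (TensorProduct.map ca cb) ∘ₗ (Algebra.TensorProduct.map ψ ψ).toLinearMap)) hz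
    rintro ⟨mu, nu⟩ hmn _ ⟨w, rfl⟩
    induction w using TensorProduct.induction_on with
    | zero => simp
    | add u v hu hv => rw [map_add]; exact Submodule.add_mem _ hu hv
    | tmul u v =>
      obtain ⟨u, hu⟩ := u
      obtain ⟨v, hv⟩ := v
      simp only at hmn hu hv
      have hh : htJ mu + htJ nu = -(n : ℤ) := by rw [← map_add, hmn, hl]
      suffices h : ca (ψ u) = 0 ∨ cb (ψ v) = 0 by
        rcases h with h | h <;> simp [h]
      by_cases hmu : 0 ≤ htJ mu
      · left
        exact hconst mu hmu u hu a (by omega) hm0 ca hca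
      by_cases hnu : 0 ≤ htJ nu
      · right
        exact hconst nu hnu v hv (b+1) (by omega) (by omega) cb hcb
      obtain ⟨n1, h1⟩ : ∃ n1 : ℕ, htJ mu = -(n1 : ℤ) := ⟨(htJ mu).natAbs, by omega⟩
      obtain ⟨n2, h2⟩ : ∃ n2 : ℕ, htJ nu = -(n2 : ℤ) := ⟨(htJ nu).natAbs, by omega⟩
      have hn12 : n = n1 + n2 := by omega
      by_cases hA : n1 * a < a
      · left
        obtain ⟨g, hg⟩ := Ideal.Quotient.mk_surjective (ψ u)
        have hg' : gaπ k (p ^ r) g = ψ u := hg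
        rw [← hg', hca]
        exact ih n1 (by omega) mu h1 u hu g hg' a (by omega) hA
      · right
        obtain ⟨g, hg⟩ := Ideal.Quotient.mk_surjective (ψ v)
        have hg' : gaπ k (p ^ r) g = ψ v := hg
        rw [← hg', hcb]
        refine ih n2 (by omega) nu h2 v hv g hg' (b+1) (by omega) ?_
        rw [hn12, add_mul] at hnj
        have : a ≤ n1 * a := by omega
        linarith
  have hz' := hz _ (hwt lam x hx)
  rw [LinearMap.mem_ker] at hz'
  have hz2 := key.symm.trans hz'
  exact (mul_eq_zero.1 hz2).resolve_left
    (choose_pow_ne k p r (a + (b+1)) hp hr (by omega) hj)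

theorem stmt_3 [IsAlgClosed k] (p r : ℕ) (hp : p.Prime) [CharP k p] (hr : 1 ≤ r)
    [Fintype ι]
    (root : ι → Λ) (htJ : Λ →+ ℤ) (hroot : ∀ i, 1 ≤ htJ (root i))
    (comul : MvPolynomial ι k →ₐ[k] MvPolynomial ι k ⊗[k] MvPolynomial ι k)
    (hcul : ∀ f, (TensorProduct.lid k (MvPolynomial ι k))
        ((TensorProduct.map (uCounit k ι).toLinearMap
          (LinearMap.id : MvPolynomial ι k →ₗ[k] MvPolynomial ι k)) (comul f)) = f)
    (hcur : ∀ f, (TensorProduct.rid k (MvPolynomial ι k))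
        ((TensorProduct.map (LinearMap.id : MvPolynomial ι k →ₗ[k] MvPolynomial ι k)
          (uCounit k ι).toLinearMap) (comul f)) = f)
    (hwt : ∀ (lam : Λ), ∀ x ∈ wtSub k ι Λ root lam,
        comul x ∈ ⨆ (pr : Λ × Λ) (_ : pr.1 + pr.2 = lam),
          LinearMap.range (TensorProduct.map (wtSub k ι Λ root pr.1).subtype
            (wtSub k ι Λ root pr.2).subtype))
    (ΔQ : (Polynomial k ⧸ gaI k (p ^ r)) →ₐ[k]
        (Polynomial k ⧸ gaI k (p ^ r)) ⊗[k] (Polynomial k ⧸ gaI k (p ^ r)))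
    (hΔQ : ΔQ.comp (gaπ k (p ^ r)) =
        (Algebra.TensorProduct.map (gaπ k (p ^ r)) (gaπ k (p ^ r))).comp (gaComul k))
    (εQ : (Polynomial k ⧸ gaI k (p ^ r)) →ₐ[k] k)
    (hεQ : εQ.comp (gaπ k (p ^ r)) = gaCounit k)
    (ψ : MvPolynomial ι k →ₐ[k] Polynomial k ⧸ gaI k (p ^ r))
    (hψΔ : (Algebra.TensorProduct.map ψ ψ).comp comul = ΔQ.comp ψ)
    (hψε : εQ.comp ψ = uCounit k ι)
    -- `L = φ*_Y` is the lift of `φ*` with respect to the generators `Y`: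
    (L : MvPolynomial ι k →ₐ[k] Polynomial k)
    (hL : ∀ i : ι, L (MvPolynomial.X i) ∈ Polynomial.degreeLT k (p ^ r) ∧
        gaπ k (p ^ r) (L (MvPolynomial.X i)) = ψ (MvPolynomial.X i)) :
    -- conclusion: on each weight space the lift has degree at most `|ht_J(λ)| ⬝ p^{r-1}`
    ∀ (lam : Λ), ∀ x ∈ wtSub k ι Λ root lam,
      (L x).degree ≤ (((htJ lam).natAbs * p ^ (r - 1) : ℕ) : WithBot ℕ) := by
  intro lam x hx
  have hX : ∀ i, (L (MvPolynomial.X i)).natDegree ≤ (htJ (root i)).natAbs * p ^ (r-1) := by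
    intro i
    rw [Polynomial.natDegree_le_iff_coeff_eq_zero]
    intro j hj
    by_cases hjN : j < p ^ r
    · refine main_coef k ι Λ p r hp hr root htJ hroot comul hwt ΔQ hΔQ ψ hψΔ
        (htJ (root i)).natAbs (- root i) ?_ (MvPolynomial.X i) ?_ _ (hL i).2 j hjN hj
      · rw [map_neg]
        have := hroot i
        omega
      · exact MvPolynomial.isWeightedHomogeneous_X k _ i
    · exact Polynomial.coeff_eq_zero_of_degree_lt
        (lt_of_lt_of_le (Polynomial.mem_degreeLT.1 (hL i).1) (by exact_mod_cast not_lt.1 hjN))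
  refine Polynomial.natDegree_le_iff_degree_le.1 ?_
  rw [MvPolynomial.as_sum x, map_sum]
  refine Polynomial.natDegree_sum_le_of_forall_le _ _ fun d hd => ?_
  have hw : Finsupp.weight (fun i => - root i) d = lam := hx (MvPolynomial.mem_support_iff.1 hd)
  have h2 := ht_weight ι Λ root htJ d
  rw [hw] at h2
  rw [MvPolynomial.monomial_eq, map_mul, ← MvPolynomial.algebraMap_eq, AlgHom.commutes,
    Polynomial.algebraMap_eq]
  refine (Polynomial.natDegree_C_mul_le _ _).trans ?_
  rw [Finsupp.prod, map_prod]
  refine (Polynomial.natDegree_prod_le _ _).trans ?_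
  have h3 : (htJ lam).natAbs = ∑ i ∈ d.support, d i * (htJ (root i)).natAbs := by
    rw [h2, Int.natAbs_neg, Finsupp.sum]
    zify
    rw [abs_of_nonneg]
    · refine Finset.sum_congr rfl fun i _ => ?_
      rw [abs_of_nonneg (by linarith [hroot i])]
    · refine Finset.sum_nonneg fun i _ => ?_
      have := hroot i
      positivity
  rw [h3, Finset.sum_mul]
  refine Finset.sum_le_sum fun i _ => ?_
  rw [map_pow]
  refine Polynomial.natDegree_pow_le.trans ?_
  rw [mul_assoc]
  exact Nat.mul_le_mul_left _ (hX i)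

end Stmt3
end
end

section
/- Assume p is greater than the nilpotence class of U, and let k[U]_{<p} := Σ_{|ht_J(λ)|<p} k[U]_λ. Let φ : 𝔾_{a(r)} → U be a homomorphism of affine group schemes with comorphism φ* : k[U] → k[t]/(t^{p^r}). Then the lift φ*_Y : k[U] → k[t] satisfies φ*_Y(x) = V ∩ π_r^{-1}(φ*(x)) for every x ∈ k[U]_{<p}, where V ⊆ k[t] is the subspace of polynomials of degree less than p^r. In particular, if X = {x₁,…,x_n} is any other subset of k[U]_{<p} on which k[U] is free as a k-algebra, then φ*_X = φ*_Y. -/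
/-!
STATEMENT 4 (Lemma 2.6, `changes`): same setting as Statement 2, and assume in addition
that `p` is greater than the nilpotence class of `U`; since the nilpotence class of `U`
equals the maximum of `ht_J(α)` over the roots `α` of `U`, this is the hypothesis
`ht_J(α_i) < p` for every `i`.  Let `k[U]_{<p} = Σ_{|ht_J(λ)|<p} k[U]_λ`, and let
`L = φ*_Y` be the lift of `φ*` with respect to the generators `Y`.  Then for every
`x ∈ k[U]_{<p}` the value `L x` is the unique polynomial of degree `< p^r` (i.e. the
element of `V ∩ π_r⁻¹(φ*(x))`) representing `φ*(x)`; in particular, for any other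
subset `X ⊆ k[U]_{<p}` on which `k[U]` is free as a `k`-algebra, the lift `φ*_X`
(characterised by sending each member of `X` to its degree `< p^r` representative)
coincides with `φ*_Y`.
-/


noncomputable section

open Polynomial MvPolynomial TensorProduct
open scoped TensorProduct

namespace Stmt4

variable (k : Type) [Field k]

/-- The comultiplication of `k[t]`: `Δ t = t ⊗ 1 + 1 ⊗ t`. -/
def gaComul : Polynomial k →ₐ[k] Polynomial k ⊗[k] Polynomial k :=
  Polynomial.aeval (Polynomial.X ⊗ₜ[k] (1 : Polynomial k) + (1 : Polynomial k) ⊗ₜ[k] Polynomial.X)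

/-- The counit of `k[t]`: evaluation at `0`. -/
def gaCounit : Polynomial k →ₐ[k] k := Polynomial.aeval 0

/-- The Hopf ideal `(t^m)` of `k[t]`. -/
def gaI (m : ℕ) : Ideal (Polynomial k) := Ideal.span {Polynomial.X ^ m}

/-- The canonical projection `π : k[t] → k[t]/(t^m)`. -/
def gaπ (m : ℕ) : Polynomial k →ₐ[k] Polynomial k ⧸ gaI k m :=
  Ideal.Quotient.mkₐ k (gaI k m)

variable (ι Λ : Type) [AddCommGroup Λ]

/-- The `T`-weight space `k[U]_λ`:  `k[U] = k[Y_{α₁},…,Y_{α_n}]` with `Y_{α_i}` of weight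
`-α_i`, so `k[U]_λ` is spanned by the monomials of total weight `λ` for the weight
function `i ↦ -root i`. -/
def wtSub (root : ι → Λ) (lam : Λ) : Submodule k (MvPolynomial ι k) :=
  MvPolynomial.weightedHomogeneousSubmodule k (fun i => - root i) lam

/-- The counit (augmentation) of `k[U]`: evaluation at the identity of `U`, i.e. at the
point all of whose root coordinates are `0`. -/
def uCounit : MvPolynomial ι k →ₐ[k] k := MvPolynomial.aeval (fun _ : ι => (0 : k))

/-- The subspace `k[U]_{<p} = Σ_{|ht_J(λ)| < p} k[U]_λ`. -/
def uLt (root : ι → Λ) (htJ : Λ →+ ℤ) (p : ℕ) : Submodule k (MvPolynomial ι k) :=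
  ⨆ (lam : Λ) (_ : (htJ lam).natAbs < p), wtSub k ι Λ root lam

lemma exists_coeffQ (m n : ℕ) (h : n < m) : ∃ c : (Polynomial k ⧸ gaI k m) →ₗ[k] k,
    ∀ f, c (gaπ k m f) = f.coeff n := by
  obtain ⟨s, hs⟩ := LinearMap.exists_rightInverse_of_surjective (gaπ k m).toLinearMap
    (LinearMap.range_eq_top.2 (Ideal.Quotient.mkₐ_surjective k (gaI k m)))
  refine ⟨(Polynomial.lcoeff k n).comp s, fun f => ?_⟩
  have h1 : gaπ k m (s (gaπ k m f)) = gaπ k m f := LinearMap.congr_fun hs (gaπ k m f)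
  have h2 : s (gaπ k m f) - f ∈ gaI k m := by
    rw [← Ideal.Quotient.eq]; exact h1
  have := Polynomial.X_pow_dvd_iff.1 (Ideal.mem_span_singleton.1 h2) n h
  rw [Polynomial.coeff_sub, sub_eq_zero] at this
  exact this

lemma comul_coeff (m a b : ℕ) (ca cb : (Polynomial k ⧸ gaI k m) →ₗ[k] k)
    (hca : ∀ f, ca (gaπ k m f) = f.coeff a) (hcb : ∀ f, cb (gaπ k m f) = f.coeff b)
    (f : Polynomial k) :
    TensorProduct.lid k k (TensorProduct.map ca cb
      (Algebra.TensorProduct.map (gaπ k m) (gaπ k m) (gaComul k f))) =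
      ((a + b).choose a : k) * f.coeff (a + b) := by
  have key : ((TensorProduct.lid k k).toLinearMap ∘ₗ TensorProduct.map ca cb ∘ₗ
      (Algebra.TensorProduct.map (gaπ k m) (gaπ k m)).toLinearMap ∘ₗ (gaComul k).toLinearMap) =
      ((a + b).choose a : k) • Polynomial.lcoeff k (a + b) := by
    ext n
    simp only [LinearMap.comp_apply, AlgHom.toLinearMap_apply, LinearEquiv.coe_coe,
      LinearMap.smul_apply, Polynomial.lcoeff_apply, Polynomial.monomial_one_right_eq_X_pow,
      gaComul, map_pow, Polynomial.aeval_X, Polynomial.coeff_X_pow]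
    rw [← map_pow, (Commute.all _ _).add_pow]
    simp only [Algebra.TensorProduct.tmul_pow, one_pow, Algebra.TensorProduct.tmul_mul_tmul,
      one_mul, mul_one, map_sum]
    have : ∀ j ∈ Finset.range (n + 1), (TensorProduct.lid k k) (TensorProduct.map ca cb
        (Algebra.TensorProduct.map (gaπ k m) (gaπ k m)
          (((Polynomial.X ^ j : Polynomial k) ⊗ₜ[k] (Polynomial.X ^ (n - j) : Polynomial k)) *
            (Nat.cast (n.choose j) : Polynomial k ⊗[k] Polynomial k)))) =
        if j = a then (if a + b = n then ((a + b).choose a : k) else 0) else 0 := by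
      intro j hj
      have hj' : j ≤ n := by simpa [Nat.lt_succ_iff] using hj
      rw [mul_comm, ← nsmul_eq_mul, map_nsmul, map_nsmul, map_nsmul,
        Algebra.TensorProduct.map_tmul, TensorProduct.map_tmul, TensorProduct.lid_tmul, hca, hcb,
        Polynomial.coeff_X_pow, Polynomial.coeff_X_pow]
      by_cases h1 : j = a
      · subst h1
        by_cases h2 : j + b = n
        · subst h2; simp
        · have : b ≠ n - j := by omega
          simp [h2, this]
      · have : a ≠ j := fun h => h1 h.symm
        simp [h1, this]
    rw [Finset.sum_congr rfl this, Finset.sum_ite_eq']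
    by_cases h2 : a + b = n
    · have : a < n + 1 := by omega
      simp [h2, this]
    · simp [h2]
  exact LinearMap.congr_fun key f

lemma choose_ne (p r n : ℕ) (hp : p.Prime) [CharP k p] (h1 : p ^ r ≤ n) (h2 : n < p ^ (r + 1)) :
    ((n.choose (p ^ r) : ℕ) : k) ≠ 0 := by
  rw [Ne, CharP.cast_eq_zero_iff k p]
  intro hd
  have hlog : Nat.log p n < r + 1 := Nat.log_lt_of_lt_pow (by have := pow_pos hp.pos r; omega) h2
  have h0 := Nat.factorization_choose hp h1 hlog
  have : (n.choose (p ^ r)).factorization p = 0 := by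
    rw [h0, Finset.card_eq_zero, Finset.filter_eq_empty_iff]
    intro i hi
    rw [Finset.mem_Ico] at hi
    have hdv : p ^ i ∣ p ^ r := pow_dvd_pow p (by omega)
    rw [Nat.mod_eq_zero_of_dvd hdv, zero_add, not_le]
    exact Nat.mod_lt _ (pow_pos hp.pos _)
  rcases (Nat.factorization_eq_zero_iff _ _).1 this with h | h | h
  · exact h hp
  · exact h hd
  · exact (Nat.choose_pos h1).ne' h

lemma wt_sum [Fintype ι] (root : ι → Λ) (htJ : Λ →+ ℤ) (lam : Λ) (x : MvPolynomial ι k)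
    (hx : x ∈ wtSub k ι Λ root lam) (e : ι →₀ ℕ) (he : e ∈ x.support) :
    ∑ i, (e i : ℤ) * htJ (root i) = - htJ lam := by
  have h := hx (MvPolynomial.mem_support_iff.1 he)
  rw [← h, Finsupp.weight_apply, Finsupp.sum_fintype _ _ (by simp)]
  simp

theorem stmt_4 [IsAlgClosed k] (p r : ℕ) (hp : p.Prime) [CharP k p] (hr : 1 ≤ r)
    [Fintype ι]
    (root : ι → Λ) (htJ : Λ →+ ℤ) (hroot : ∀ i, 1 ≤ htJ (root i))
    -- the nilpotence class of `U` (equal to `max ht_J(α)`) is less than `p`: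
    (hnil : ∀ i, htJ (root i) < (p : ℤ))
    (comul : MvPolynomial ι k →ₐ[k] MvPolynomial ι k ⊗[k] MvPolynomial ι k)
    (hcul : ∀ f, (TensorProduct.lid k (MvPolynomial ι k))
        ((TensorProduct.map (uCounit k ι).toLinearMap
          (LinearMap.id : MvPolynomial ι k →ₗ[k] MvPolynomial ι k)) (comul f)) = f)
    (hcur : ∀ f, (TensorProduct.rid k (MvPolynomial ι k))
        ((TensorProduct.map (LinearMap.id : MvPolynomial ι k →ₗ[k] MvPolynomial ι k)
          (uCounit k ι).toLinearMap) (comul f)) = f)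
    (hwt : ∀ (lam : Λ), ∀ x ∈ wtSub k ι Λ root lam,
        comul x ∈ ⨆ (pr : Λ × Λ) (_ : pr.1 + pr.2 = lam),
          LinearMap.range (TensorProduct.map (wtSub k ι Λ root pr.1).subtype
            (wtSub k ι Λ root pr.2).subtype))
    (ΔQ : (Polynomial k ⧸ gaI k (p ^ r)) →ₐ[k]
        (Polynomial k ⧸ gaI k (p ^ r)) ⊗[k] (Polynomial k ⧸ gaI k (p ^ r)))
    (hΔQ : ΔQ.comp (gaπ k (p ^ r)) =
        (Algebra.TensorProduct.map (gaπ k (p ^ r)) (gaπ k (p ^ r))).comp (gaComul k))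
    (εQ : (Polynomial k ⧸ gaI k (p ^ r)) →ₐ[k] k)
    (hεQ : εQ.comp (gaπ k (p ^ r)) = gaCounit k)
    (ψ : MvPolynomial ι k →ₐ[k] Polynomial k ⧸ gaI k (p ^ r))
    (hψΔ : (Algebra.TensorProduct.map ψ ψ).comp comul = ΔQ.comp ψ)
    (hψε : εQ.comp ψ = uCounit k ι)
    -- `L = φ*_Y`, the lift of `φ*` with respect to the generators `Y`:
    (L : MvPolynomial ι k →ₐ[k] Polynomial k)
    (hL : ∀ i : ι, L (MvPolynomial.X i) ∈ Polynomial.degreeLT k (p ^ r) ∧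
        gaπ k (p ^ r) (L (MvPolynomial.X i)) = ψ (MvPolynomial.X i)) :
    -- (1) for every `x ∈ k[U]_{<p}`, `L x` is the degree `< p^r` representative of
    --     `φ*(x)`, i.e. `φ*_Y(x) = V ∩ π_r⁻¹(φ*(x))`:
    (∀ x ∈ uLt k ι Λ root htJ p,
        L x ∈ Polynomial.degreeLT k (p ^ r) ∧ gaπ k (p ^ r) (L x) = ψ x) ∧
    -- (2) if `X = {x_j}` is any other subset of `k[U]_{<p}` on which `k[U]` is free as a
    --     `k`-algebra, then the lift `φ*_X` equals `φ*_Y`: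
    (∀ (ι' : Type) (gens : ι' → MvPolynomial ι k),
        (∀ j, gens j ∈ uLt k ι Λ root htJ p) →
        Function.Bijective
          ⇑(MvPolynomial.aeval gens : MvPolynomial ι' k →ₐ[k] MvPolynomial ι k) →
        ∀ L' : MvPolynomial ι k →ₐ[k] Polynomial k,
          (∀ j, L' (gens j) ∈ Polynomial.degreeLT k (p ^ r) ∧
            gaπ k (p ^ r) (L' (gens j)) = ψ (gens j)) →
          L' = L) := by
  obtain ⟨r, rfl⟩ : ∃ s, r = s + 1 := ⟨r - 1, by omega⟩
  have hppos : 0 < p ^ r := pow_pos hp.pos r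
  have hsucc : p ^ (r + 1) = p ^ r * p := pow_succ p r
  have hlt : p ^ r < p ^ (r + 1) := by
    rw [hsucc]; exact lt_mul_of_one_lt_right hppos hp.one_lt
  -- degree zero case
  have hzero : ∀ lam, - htJ lam ≤ 0 → ∀ x ∈ wtSub k ι Λ root lam, ∀ n,
      ∀ c : (Polynomial k ⧸ gaI k (p ^ (r + 1))) →ₗ[k] k,
      (∀ f, c (gaπ k (p ^ (r + 1)) f) = f.coeff n) → 0 < n → c (ψ x) = 0 := by
    intro lam hlam x hx n c hc hn
    have hx0 : x = MvPolynomial.C (x.coeff 0) := by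
      classical
      ext e
      rw [MvPolynomial.coeff_C]
      split_ifs with h
      · rw [h]
      · by_contra hne
        apply h
        have hs := wt_sum k ι Λ root htJ lam x hx e (MvPolynomial.mem_support_iff.2 hne)
        have hnn : ∀ i ∈ Finset.univ, 0 ≤ (e i : ℤ) * htJ (root i) := fun i _ =>
          mul_nonneg (by positivity) (by linarith [hroot i])
        have hz : ∑ i, (e i : ℤ) * htJ (root i) = 0 :=
          le_antisymm (by rw [hs]; exact hlam) (Finset.sum_nonneg hnn)
        rw [Finset.sum_eq_zero_iff_of_nonneg hnn] at hz
        ext i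
        have h3 := hz i (Finset.mem_univ i)
        have h4 := hroot i
        rcases mul_eq_zero.1 h3 with h5 | h5
        · simp only [Finsupp.coe_zero, Pi.zero_apply]; exact_mod_cast h5.symm
        · omega
    rw [hx0, ← MvPolynomial.algebraMap_eq, AlgHom.commutes,
      ← (gaπ k (p ^ (r + 1))).commutes, hc, Polynomial.algebraMap_eq, Polynomial.coeff_C,
      if_neg hn.ne']
  have hmain : ∀ d : ℕ, ∀ lam, - htJ lam ≤ d → ∀ x ∈ wtSub k ι Λ root lam, ∀ n,
      n < p ^ (r + 1) → ∀ c : (Polynomial k ⧸ gaI k (p ^ (r + 1))) →ₗ[k] k,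
      (∀ f, c (gaπ k (p ^ (r + 1)) f) = f.coeff n) → d * p ^ r < n → c (ψ x) = 0 := by
    intro d
    induction d with
    | zero =>
      intro lam hlam x hx n _ c hc hdn
      exact hzero lam (by simpa using hlam) x hx n c hc (by omega)
    | succ d ih =>
      intro lam hlam x hx n hn c hc hdn
      obtain ⟨b, rfl⟩ : ∃ b, n = p ^ r + b := ⟨n - p ^ r, by rw [add_mul] at hdn; omega⟩
      have hb : d * p ^ r < b := by rw [add_mul] at hdn; omega
      obtain ⟨ca, hca⟩ := exists_coeffQ k (p ^ (r + 1)) (p ^ r) hlt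
      obtain ⟨cb, hcb⟩ := exists_coeffQ k (p ^ (r + 1)) b (by omega)
      let T : MvPolynomial ι k ⊗[k] MvPolynomial ι k →ₗ[k] k :=
        (TensorProduct.lid k k).toLinearMap ∘ₗ TensorProduct.map ca cb ∘ₗ
          (Algebra.TensorProduct.map ψ ψ).toLinearMap
      have hT : T (comul x) = 0 := by
        have hle : (⨆ (pr : Λ × Λ) (_ : pr.1 + pr.2 = lam),
          LinearMap.range (TensorProduct.map (wtSub k ι Λ root pr.1).subtype
            (wtSub k ι Λ root pr.2).subtype)) ≤ LinearMap.ker T := by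
          refine iSup₂_le fun pr hpr => ?_
          rw [LinearMap.range_le_ker_iff]
          apply TensorProduct.ext'
          rintro ⟨y, hy⟩ ⟨z, hz⟩
          have hTe : T (y ⊗ₜ[k] z) = ca (ψ y) * cb (ψ z) := by
            simp [T]
          have hsum : htJ pr.1 + htJ pr.2 = htJ lam := by rw [← hpr, map_add]
          change T (y ⊗ₜ[k] z) = 0
          rw [hTe]
          by_cases h1 : - htJ pr.1 ≤ 0
          · rw [hzero pr.1 h1 y hy _ ca hca hppos, zero_mul]
          · rw [ih pr.2 (by push_cast at hlam; omega) z hz b (by omega) cb hcb hb, mul_zero]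
        exact hle (hwt lam x hx)
      obtain ⟨f, hf⟩ := Ideal.Quotient.mkₐ_surjective k (gaI k (p ^ (r + 1))) (ψ x)
      have hf' : gaπ k (p ^ (r + 1)) f = ψ x := hf
      have e1 : Algebra.TensorProduct.map ψ ψ (comul x) = ΔQ (ψ x) := DFunLike.congr_fun hψΔ x
      have e2 : ΔQ (gaπ k (p ^ (r + 1)) f) =
        Algebra.TensorProduct.map (gaπ k (p ^ (r + 1))) (gaπ k (p ^ (r + 1))) (gaComul k f) :=
        DFunLike.congr_fun hΔQ f
      have e3 : T (comul x) = TensorProduct.lid k k (TensorProduct.map ca cb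
          (Algebra.TensorProduct.map ψ ψ (comul x))) := rfl
      rw [e1, ← hf', e2, comul_coeff k _ _ _ ca cb hca hcb, hT] at e3
      rw [← hf', hc]
      exact (mul_eq_zero.1 e3.symm).resolve_left
        (choose_ne k p r (p ^ r + b) hp (by omega) hn)
  have hdegX : ∀ i, (L (MvPolynomial.X i)).natDegree ≤ (htJ (root i)).toNat * p ^ r := by
    intro i
    rw [Polynomial.natDegree_le_iff_coeff_eq_zero]
    intro n hn
    by_cases hnq : n < p ^ (r + 1)
    · obtain ⟨c, hc⟩ := exists_coeffQ k (p ^ (r + 1)) n hnq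
      rw [← hc, (hL i).2]
      refine hmain _ (- root i) ?_ _ ?_ n hnq c hc hn
      · rw [map_neg, neg_neg]; exact Int.self_le_toNat _
      · exact MvPolynomial.isWeightedHomogeneous_X k _ i
    · have h1 := (hL i).1
      rw [Polynomial.mem_degreeLT] at h1
      exact Polynomial.coeff_eq_zero_of_degree_lt
        (lt_of_lt_of_le h1 (by exact_mod_cast not_lt.1 hnq))
  have hπ : ∀ x, gaπ k (p ^ (r + 1)) (L x) = ψ x := by
    intro x
    have : (gaπ k (p ^ (r + 1))).comp L = ψ := by
      apply MvPolynomial.algHom_ext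
      intro i
      exact (hL i).2
    exact DFunLike.congr_fun this x
  have hdeg : ∀ x ∈ uLt k ι Λ root htJ p, L x ∈ Polynomial.degreeLT k (p ^ (r + 1)) := by
    have hle : uLt k ι Λ root htJ p ≤
        (Polynomial.degreeLT k (p ^ (r + 1))).comap L.toLinearMap := by
      refine iSup₂_le fun lam hlam => ?_
      intro x hx
      rw [Submodule.mem_comap, AlgHom.toLinearMap_apply, x.as_sum, map_sum]
      refine Submodule.sum_mem _ fun e he => ?_
      have hs := wt_sum k ι Λ root htJ lam x hx e he
      have hs2 : ∑ i, e i * (htJ (root i)).toNat < p := by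
        have : ((∑ i, e i * (htJ (root i)).toNat : ℕ) : ℤ) = - htJ lam := by
          rw [← hs]; push_cast
          refine Finset.sum_congr rfl fun i _ => ?_
          rw [Int.toNat_of_nonneg (by linarith [hroot i])]
        omega
      rw [MvPolynomial.monomial_eq, map_mul, ← MvPolynomial.algebraMap_eq, AlgHom.commutes,
        Polynomial.algebraMap_eq, Polynomial.mem_degreeLT,
        Finsupp.prod_fintype _ _ (by simp), map_prod]
      have hnd : (Polynomial.C (x.coeff e) * ∏ i, L (MvPolynomial.X i ^ e i)).natDegree ≤
          (∑ i, e i * (htJ (root i)).toNat) * p ^ r := by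
        refine (Polynomial.natDegree_C_mul_le _ _).trans
          ((Polynomial.natDegree_prod_le _ _).trans ?_)
        rw [Finset.sum_mul]
        refine Finset.sum_le_sum fun i _ => ?_
        rw [map_pow, mul_assoc]
        exact Polynomial.natDegree_pow_le.trans (Nat.mul_le_mul_left _ (hdegX i))
      refine lt_of_le_of_lt Polynomial.degree_le_natDegree ?_
      have : (∑ i, e i * (htJ (root i)).toNat) * p ^ r < p ^ (r + 1) := by
        rw [hsucc, mul_comm]
        exact Nat.mul_lt_mul_of_pos_left hs2 hppos
      exact_mod_cast lt_of_le_of_lt hnd this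
    exact fun x hx => hle hx
  refine ⟨fun x hx => ⟨hdeg x hx, hπ x⟩, ?_⟩
  intro ι' gens hg hbij L' hL'
  have hgen : ∀ j, L' (gens j) = L (gens j) := by
    intro j
    ext n
    by_cases hnq : n < p ^ (r + 1)
    · obtain ⟨c, hc⟩ := exists_coeffQ k (p ^ (r + 1)) n hnq
      rw [← hc, ← hc, (hL' j).2, hπ]
    · have hh : ∀ f ∈ Polynomial.degreeLT k (p ^ (r + 1)), f.coeff n = 0 := by
        intro f h1
        rw [Polynomial.mem_degreeLT] at h1
        exact Polynomial.coeff_eq_zero_of_degree_lt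
          (lt_of_lt_of_le h1 (by exact_mod_cast not_lt.1 hnq))
      rw [hh _ (hL' j).1, hh _ (hdeg _ (hg j))]
  have hcomp : L'.comp (MvPolynomial.aeval gens) = L.comp (MvPolynomial.aeval gens) := by
    apply MvPolynomial.algHom_ext
    intro j
    simpa using hgen j
  ext1 i
  obtain ⟨y, hy⟩ := hbij.2 (MvPolynomial.X i)
  rw [← hy]
  exact DFunLike.congr_fun hcomp y

end Stmt4
end
end

section
/- Assume the nilpotence class of U is less than p. Then for every homomorphism of affine group schemes φ : 𝔾_{a(r)} → U with comorphism φ* : k[U] → k[t]/(t^{p^r}), the lift φ*_Y : k[U] → k[t] is a homomorphism of Hopf algebras. -/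
/-!
STATEMENT 5 (Proposition 2.7, first part): same setting as Statement 2, and assume that
the nilpotence class of `U` is less than `p` (equivalently, `ht_J(α_i) < p` for every
root `α_i` of `U`).  Then for every homomorphism of affine group schemes
`φ : 𝔾_{a(r)} → U`, with comorphism `φ* : k[U] → k[t]/(t^{p^r})`, the lift
`φ*_Y : k[U] → k[t]` (the algebra map sending each generator `Y_α` to the unique
degree `< p^r` representative of `φ*(Y_α)`) is a homomorphism of Hopf algebras, i.e. it
is compatible with the comultiplications and the counits (compatibility with the
antipodes being automatic for bialgebra maps of Hopf algebras).
-/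



noncomputable section

open Polynomial MvPolynomial TensorProduct
open scoped TensorProduct

namespace Stmt5

variable (k : Type) [Field k]

/-- The comultiplication of `k[t]`: `Δ t = t ⊗ 1 + 1 ⊗ t`. -/
def gaComul : Polynomial k →ₐ[k] Polynomial k ⊗[k] Polynomial k :=
  Polynomial.aeval (Polynomial.X ⊗ₜ[k] (1 : Polynomial k) + (1 : Polynomial k) ⊗ₜ[k] Polynomial.X)

/-- The counit of `k[t]`: evaluation at `0`. -/
def gaCounit : Polynomial k →ₐ[k] k := Polynomial.aeval 0

/-- The Hopf ideal `(t^m)` of `k[t]`. -/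
def gaI (m : ℕ) : Ideal (Polynomial k) := Ideal.span {Polynomial.X ^ m}

/-- The canonical projection `π : k[t] → k[t]/(t^m)`. -/
def gaπ (m : ℕ) : Polynomial k →ₐ[k] Polynomial k ⧸ gaI k m :=
  Ideal.Quotient.mkₐ k (gaI k m)

variable (ι Λ : Type) [AddCommGroup Λ]

/-- The `T`-weight space `k[U]_λ`:  `k[U] = k[Y_{α₁},…,Y_{α_n}]` with `Y_{α_i}` of weight
`-α_i`, so `k[U]_λ` is spanned by the monomials of total weight `λ` for the weight
function `i ↦ -root i`. -/
def wtSub (root : ι → Λ) (lam : Λ) : Submodule k (MvPolynomial ι k) :=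
  MvPolynomial.weightedHomogeneousSubmodule k (fun i => - root i) lam

/-- The counit (augmentation) of `k[U]`: evaluation at the identity of `U`, i.e. at the
point all of whose root coordinates are `0`. -/
def uCounit : MvPolynomial ι k →ₐ[k] k := MvPolynomial.aeval (fun _ : ι => (0 : k))

/-- The subspace `k[U]_{<p} = Σ_{|ht_J(λ)| < p} k[U]_λ`. -/
def uLt (root : ι → Λ) (htJ : Λ →+ ℤ) (p : ℕ) : Submodule k (MvPolynomial ι k) :=
  ⨆ (lam : Λ) (_ : (htJ lam).natAbs < p), wtSub k ι Λ root lam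

/-- `n` is a sum of at most `h` powers `p ^ v` with `v < r`. -/
def DD (p r h n : ℕ) : Prop :=
  ∃ s : Multiset ℕ, s.card ≤ h ∧ (∀ x ∈ s, ∃ v < r, x = p ^ v) ∧ s.sum = n

lemma DD_zero (p r h : ℕ) : DD p r h 0 := ⟨0, by simp, by simp, by simp⟩

lemma DD_add {p r a b m n : ℕ} (h1 : DD p r a m) (h2 : DD p r b n) :
    DD p r (a + b) (m + n) := by
  obtain ⟨s, hs, hs', rfl⟩ := h1
  obtain ⟨t, ht, ht', rfl⟩ := h2
  refine ⟨s + t, by simp; omega, ?_, by simp⟩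
  intro x hx
  rcases Multiset.mem_add.1 hx with h | h
  · exact hs' x h
  · exact ht' x h

lemma DD_pow {p r h v : ℕ} (hv : v < r) (hh : 1 ≤ h) : DD p r h (p ^ v) :=
  ⟨{p ^ v}, by simpa using hh, by simpa using ⟨v, hv, rfl⟩, by simp⟩

lemma DD_lt {p r h n : ℕ} (hr : 1 ≤ r) (hh : h < p) (hD : DD p r h n) : n < p ^ r := by
  obtain ⟨s, hs, hs', rfl⟩ := hD
  have hp : 0 < p := by omega
  have h1 : s.sum ≤ s.card • p ^ (r - 1) := by
    apply Multiset.sum_le_card_nsmul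
    intro x hx
    obtain ⟨v, hv, rfl⟩ := hs' x hx
    exact Nat.pow_le_pow_right hp (by omega)
  have h2 : p ^ r = p * p ^ (r - 1) := by
    rw [← pow_succ']; congr 1; omega
  rw [h2]
  have h3 : 0 < p ^ (r - 1) := by positivity
  rw [smul_eq_mul] at h1
  calc s.sum ≤ s.card * p ^ (r - 1) := h1
    _ < p * p ^ (r - 1) := Nat.mul_lt_mul_of_pos_right (by omega) h3

lemma exists_choose {p : ℕ} (hp : p.Prime) (n : ℕ) (hn : n ≠ 0) :
    ∃ v, p ^ v ≤ n ∧ ¬ p ∣ n.choose (p ^ v) := by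
  have := Fact.mk hp
  induction n using Nat.strong_induction_on with
  | _ n ih =>
    by_cases h : p ∣ n
    · obtain ⟨m, rfl⟩ := h
      have hm : m ≠ 0 := by rintro rfl; simp at hn
      have hlt : m < p * m := by
        have := hp.two_le
        nlinarith [Nat.pos_of_ne_zero hm]
      obtain ⟨v, hv, hv'⟩ := ih m hlt hm
      refine ⟨v + 1, by rw [pow_succ']; exact Nat.mul_le_mul_left _ hv, ?_⟩
      have key := Choose.choose_modEq_choose_mod_mul_choose_div_nat (n := p * m)
        (k := p ^ (v + 1)) (p := p)
      rw [pow_succ', Nat.mul_mod_right, Nat.mul_mod_right, Nat.mul_div_cancel_left _ hp.pos,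
        Nat.mul_div_cancel_left _ hp.pos, Nat.choose_self, one_mul] at key
      rw [pow_succ']
      rwa [key.dvd_iff dvd_rfl]
    · exact ⟨0, by simp; omega, by simpa using h⟩

/-- coefficients of `f` are supported on `DD`. -/
def AA (p r h : ℕ) (f : Polynomial k) : Prop := ∀ n, f.coeff n ≠ 0 → DD p r h n

variable {k} in
lemma AA_one (p r h : ℕ) : AA k p r h 1 := by
  intro n hn
  rw [Polynomial.coeff_one] at hn
  have : n = 0 := by by_contra h0; simp [h0] at hn
  subst this
  exact DD_zero _ _ _

variable {k} in
lemma AA_mul {p r a b : ℕ} {f g : Polynomial k} (hf : AA k p r a f) (hg : AA k p r b g) :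
    AA k p r (a + b) (f * g) := by
  intro n hn
  rw [Polynomial.coeff_mul] at hn
  obtain ⟨x, hx, hx'⟩ := Finset.exists_ne_zero_of_sum_ne_zero hn
  rw [← Finset.HasAntidiagonal.mem_antidiagonal.1 hx]
  exact DD_add (hf _ (left_ne_zero_of_mul hx')) (hg _ (right_ne_zero_of_mul hx'))

variable {k} in
lemma AA_pow {p r a : ℕ} {f : Polynomial k} (hf : AA k p r a f) (m : ℕ) :
    AA k p r (m * a) (f ^ m) := by
  induction m with
  | zero => simpa using AA_one _ _ _
  | succ m ih => rw [pow_succ, Nat.succ_mul]; exact AA_mul ih hf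

variable {k ι} in
lemma AA_monomial {p r : ℕ} (L : MvPolynomial ι k →ₐ[k] Polynomial k) (w : ι → ℕ) (d : ι →₀ ℕ)
    (hd : ∀ i, d i ≠ 0 → AA k p r (w i) (L (MvPolynomial.X i))) :
    AA k p r (Finsupp.weight w d) (L (MvPolynomial.monomial d 1)) := by
  induction d using Finsupp.induction_linear with
  | zero => 
    have : MvPolynomial.monomial (0 : ι →₀ ℕ) (1 : k) = 1 := rfl
    rw [this, map_one]; exact AA_one _ _ _
  | add f g hf hg =>
    have : MvPolynomial.monomial (f + g) (1 : k)
        = MvPolynomial.monomial f 1 * MvPolynomial.monomial g 1 := by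
      simp [MvPolynomial.monomial_mul]
    rw [this, map_mul, map_add]
    refine AA_mul (hf fun i hi => hd i ?_) (hg fun i hi => hd i ?_) <;> simp <;> omega
  | single i m =>
    rw [← MvPolynomial.X_pow_eq_monomial, map_pow, Finsupp.weight_single, smul_eq_mul]
    by_cases hm : m = 0
    · subst hm; simpa using AA_one _ _ _
    · exact AA_pow (hd i (by simpa using hm)) m

/-- the `(j,l)` coefficient on `k[t] ⊗ k[t]`. -/
def CC (j l : ℕ) : Polynomial k ⊗[k] Polynomial k →ₗ[k] k :=
  (TensorProduct.lid k k).toLinearMap ∘ₗ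
    TensorProduct.map (Polynomial.lcoeff k j) (Polynomial.lcoeff k l)

lemma CC_tmul (j l : ℕ) (f g : Polynomial k) : CC k j l (f ⊗ₜ g) = f.coeff j * g.coeff l := by
  simp [CC]

lemma CC_ext (u v : Polynomial k ⊗[k] Polynomial k) (h : ∀ j l, CC k j l u = CC k j l v) :
    u = v := by
  let b := (Polynomial.basisMonomials k).tensorProduct (Polynomial.basisMonomials k)
  apply b.repr.injective
  ext ⟨j, l⟩
  have : ∀ z, b.repr z (j, l) = CC k j l z := by
    intro z
    induction z with
    | zero => simp
    | add x y hx hy => simp [hx, hy]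
    | tmul f g =>
      rw [CC_tmul]
      simp [b, Module.Basis.tensorProduct_repr_tmul_apply, Polynomial.basisMonomials,
        Polynomial.toFinsuppIsoLinear_apply, Polynomial.toFinsupp_apply, mul_comm]
  rw [this, this, h]

lemma CC_comul (j l : ℕ) (f : Polynomial k) :
    CC k j l (gaComul k f) = ((j + l).choose j : k) * f.coeff (j + l) := by
  induction f using Polynomial.induction_on' with
  | add f g hf hg => simp [hf, hg, mul_add]
  | monomial n a =>
    rw [← Polynomial.C_mul_X_pow_eq_monomial, map_mul, gaComul, map_pow, Polynomial.aeval_X,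
      Polynomial.aeval_C, ← Algebra.smul_def, map_smul,
      (Commute.all _ _).add_pow, map_sum]
    simp only [Algebra.TensorProduct.tmul_pow, one_pow, Algebra.TensorProduct.tmul_mul_tmul,
      one_mul, mul_one]
    have : ∀ x ∈ Finset.range (n + 1), CC k j l
        ((((Polynomial.X : Polynomial k) ^ x) ⊗ₜ[k] ((Polynomial.X : Polynomial k) ^ (n - x)))
          * ((n.choose x : ℕ) : Polynomial k ⊗[k] Polynomial k))
        = if x = j then (if n = j + l then (n.choose j : k) else 0) else 0 := by
      intro x hx
      have hx := Finset.mem_range.1 hx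
      rw [mul_comm, ← nsmul_eq_mul, map_nsmul, CC_tmul, Polynomial.coeff_X_pow,
        Polynomial.coeff_X_pow]
      by_cases h1 : x = j
      · subst h1
        have : (l = n - x) ↔ (n = x + l) := by omega
        simp [this]
      · have : ¬ j = x := fun h => h1 h.symm
        simp [h1, this]
    rw [Finset.sum_congr rfl this, Finset.sum_ite_eq']
    by_cases hn : n = j + l
    · subst hn
      rw [if_pos (Finset.mem_range.2 (by omega)), if_pos rfl, Polynomial.coeff_C_mul,
        Polynomial.coeff_X_pow, if_pos rfl, mul_one, smul_eq_mul, mul_comm]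
    · have : ¬ (j + l = n) := fun h => hn h.symm
      simp [hn, this, Polynomial.coeff_X_pow]

/-- coefficient on the quotient. -/
lemma CC_quot {m j l : ℕ} (hj : j < m) (hl : l < m) (u v : Polynomial k ⊗[k] Polynomial k)
    (h : Algebra.TensorProduct.map (gaπ k m) (gaπ k m) u
      = Algebra.TensorProduct.map (gaπ k m) (gaπ k m) v) : CC k j l u = CC k j l v := by
  have hex : ∀ j < m, ∃ c : (Polynomial k ⧸ gaI k m) →ₗ[k] k,
      ∀ f, c (gaπ k m f) = f.coeff j := by
    intro j hj
    refine ⟨((gaI k m).restrictScalars k).liftQ (Polynomial.lcoeff k j) ?_, fun f => rfl⟩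
    intro f hf
    have hf : f ∈ gaI k m := hf
    rw [gaI, Ideal.mem_span_singleton] at hf
    exact Polynomial.X_pow_dvd_iff.1 hf j hj
  obtain ⟨c, hc⟩ := hex j hj
  obtain ⟨c', hc'⟩ := hex l hl
  have : ∀ z, CC k j l z = TensorProduct.lid k k (TensorProduct.map c c'
      (Algebra.TensorProduct.map (gaπ k m) (gaπ k m) z)) := by
    intro z
    induction z with
    | zero => simp
    | add x y hx hy => simp only [map_add, hx, hy]
    | tmul f g => simp [CC_tmul, hc, hc']
  rw [this, this, h]

variable {k ι Λ} in
lemma comul_span (root : ι → Λ) (htJ : Λ →+ ℤ) (w : ι → ℕ) (hw : ∀ i, htJ (root i) = w i)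
    (lam : Λ) (h : ℕ) (hlam : htJ lam = - (h : ℤ)) (z : MvPolynomial ι k ⊗[k] MvPolynomial ι k)
    (hz : z ∈ ⨆ (pr : Λ × Λ) (_ : pr.1 + pr.2 = lam),
          LinearMap.range (TensorProduct.map (wtSub k ι Λ root pr.1).subtype
            (wtSub k ι Λ root pr.2).subtype)) :
    z ∈ Submodule.span k {y | ∃ d e : ι →₀ ℕ, Finsupp.weight w d + Finsupp.weight w e = h ∧
      y = MvPolynomial.monomial d (1 : k) ⊗ₜ[k] MvPolynomial.monomial e (1 : k)} := by
  have hwt : ∀ d : ι →₀ ℕ, htJ (Finsupp.weight (fun i => - root i) d)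
      = - (Finsupp.weight w d : ℤ) := by
    intro d
    induction d using Finsupp.induction_linear with
    | zero => simp
    | add f g hf hg => rw [map_add, map_add, hf, hg, map_add]; push_cast; ring
    | single i m => simp [Finsupp.weight_single, hw]
  refine (iSup₂_le ?_ : _ ≤ Submodule.span k _) hz
  rintro ⟨a, b⟩ hab
  rintro _ ⟨x, rfl⟩
  induction x with
  | zero => simp
  | add x y hx hy => rw [map_add]; exact Submodule.add_mem _ hx hy
  | tmul f g =>
    obtain ⟨f, hf⟩ := f
    obtain ⟨g, hg⟩ := g
    have hf := (MvPolynomial.mem_weightedHomogeneousSubmodule _ _ _ _).1 hf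
    have hg := (MvPolynomial.mem_weightedHomogeneousSubmodule _ _ _ _).1 hg
    simp only [TensorProduct.map_tmul, Submodule.subtype_apply]
    rw [MvPolynomial.as_sum f, MvPolynomial.as_sum g, TensorProduct.sum_tmul]
    refine Submodule.sum_mem _ fun d hd => ?_
    rw [TensorProduct.tmul_sum]
    refine Submodule.sum_mem _ fun e he => ?_
    have h1 := hf (MvPolynomial.mem_support_iff.1 hd)
    have h2 := hg (MvPolynomial.mem_support_iff.1 he)
    have : ∀ (d : ι →₀ ℕ) (c : k), MvPolynomial.monomial d c = c • MvPolynomial.monomial d 1 := by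
      intro d c; simp [MvPolynomial.smul_monomial]
    rw [this d, this e, TensorProduct.smul_tmul_smul]
    refine Submodule.smul_mem _ _ (Submodule.subset_span ⟨d, e, ?_, rfl⟩)
    have h3 := hwt d
    have h4 := hwt e
    rw [h1] at h3
    rw [h2] at h4
    dsimp only at h3 h4 hab
    have h5 : htJ a + htJ b = - (h : ℤ) := by rw [← map_add, hab, hlam]
    omega

variable {k ι} in
lemma CC_span (L : MvPolynomial ι k →ₐ[k] Polynomial k) (w : ι → ℕ) (h j l : ℕ)
    (z : MvPolynomial ι k ⊗[k] MvPolynomial ι k)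
    (hz : z ∈ Submodule.span k {y | ∃ d e : ι →₀ ℕ,
      Finsupp.weight w d + Finsupp.weight w e = h ∧
      y = MvPolynomial.monomial d (1 : k) ⊗ₜ[k] MvPolynomial.monomial e (1 : k)})
    (hne : CC k j l (Algebra.TensorProduct.map L L z) ≠ 0) :
    ∃ d e : ι →₀ ℕ, Finsupp.weight w d + Finsupp.weight w e = h ∧
      (L (MvPolynomial.monomial d 1)).coeff j ≠ 0 ∧
      (L (MvPolynomial.monomial e 1)).coeff l ≠ 0 := by
  by_contra! hcon
  apply hne
  induction hz using Submodule.span_induction with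
  | mem x hx =>
    obtain ⟨d, e, hde, rfl⟩ := hx
    rw [Algebra.TensorProduct.map_tmul, CC_tmul]
    by_cases h0 : (L (MvPolynomial.monomial d 1)).coeff j = 0
    · rw [h0, zero_mul]
    · rw [hcon d e hde h0, mul_zero]
  | zero => simp
  | add x y _ _ hx hy =>
    rw [map_add, map_add]
    by_cases h1 : CC k j l (Algebra.TensorProduct.map L L x) = 0
    · by_cases h2 : CC k j l (Algebra.TensorProduct.map L L y) = 0
      · rw [h1, h2, add_zero]
      · exact absurd (hy h2) h2
    · exact absurd (hx h1) h1
  | smul a x _ hx =>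
    rw [map_smul, map_smul]
    by_cases h1 : CC k j l (Algebra.TensorProduct.map L L x) = 0
    · rw [h1, smul_zero]
    · exact absurd (hx h1) h1

theorem stmt_5 [IsAlgClosed k] (p r : ℕ) (hp : p.Prime) [CharP k p] (hr : 1 ≤ r)
    [Fintype ι]
    (root : ι → Λ) (htJ : Λ →+ ℤ) (hroot : ∀ i, 1 ≤ htJ (root i))
    -- the nilpotence class of `U` (equal to `max ht_J(α)`) is less than `p`:
    (hnil : ∀ i, htJ (root i) < (p : ℤ))
    (comul : MvPolynomial ι k →ₐ[k] MvPolynomial ι k ⊗[k] MvPolynomial ι k)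
    (hcul : ∀ f, (TensorProduct.lid k (MvPolynomial ι k))
        ((TensorProduct.map (uCounit k ι).toLinearMap
          (LinearMap.id : MvPolynomial ι k →ₗ[k] MvPolynomial ι k)) (comul f)) = f)
    (hcur : ∀ f, (TensorProduct.rid k (MvPolynomial ι k))
        ((TensorProduct.map (LinearMap.id : MvPolynomial ι k →ₗ[k] MvPolynomial ι k)
          (uCounit k ι).toLinearMap) (comul f)) = f)
    (hwt : ∀ (lam : Λ), ∀ x ∈ wtSub k ι Λ root lam,
        comul x ∈ ⨆ (pr : Λ × Λ) (_ : pr.1 + pr.2 = lam),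
          LinearMap.range (TensorProduct.map (wtSub k ι Λ root pr.1).subtype
            (wtSub k ι Λ root pr.2).subtype))
    (ΔQ : (Polynomial k ⧸ gaI k (p ^ r)) →ₐ[k]
        (Polynomial k ⧸ gaI k (p ^ r)) ⊗[k] (Polynomial k ⧸ gaI k (p ^ r)))
    (hΔQ : ΔQ.comp (gaπ k (p ^ r)) =
        (Algebra.TensorProduct.map (gaπ k (p ^ r)) (gaπ k (p ^ r))).comp (gaComul k))
    (εQ : (Polynomial k ⧸ gaI k (p ^ r)) →ₐ[k] k)
    (hεQ : εQ.comp (gaπ k (p ^ r)) = gaCounit k)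
    (ψ : MvPolynomial ι k →ₐ[k] Polynomial k ⧸ gaI k (p ^ r))
    (hψΔ : (Algebra.TensorProduct.map ψ ψ).comp comul = ΔQ.comp ψ)
    (hψε : εQ.comp ψ = uCounit k ι)
    -- `L = φ*_Y`, the lift of `φ*` with respect to the generators `Y`:
    (L : MvPolynomial ι k →ₐ[k] Polynomial k)
    (hL : ∀ i : ι, L (MvPolynomial.X i) ∈ Polynomial.degreeLT k (p ^ r) ∧
        gaπ k (p ^ r) (L (MvPolynomial.X i)) = ψ (MvPolynomial.X i)) :
    -- conclusion: `φ*_Y` is a homomorphism of Hopf algebras: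
    (Algebra.TensorProduct.map L L).comp comul = (gaComul k).comp L ∧
    (gaCounit k).comp L = uCounit k ι := by
  obtain ⟨w, hw⟩ : ∃ w : ι → ℕ, ∀ i, htJ (root i) = w i :=
    ⟨fun i => (htJ (root i)).toNat, fun i => by have := hroot i; simp; omega⟩
  have hw1 : ∀ i, 1 ≤ w i := fun i => by have := hroot i; rw [hw] at this; omega
  have hwp : ∀ i, w i < p := fun i => by have := hnil i; rw [hw] at this; omega
  have hπL : (gaπ k (p ^ r)).comp L = ψ := by
    apply MvPolynomial.algHom_ext
    intro i
    exact (hL i).2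
  have hspan : ∀ i, comul (MvPolynomial.X i) ∈ Submodule.span k {y | ∃ d e : ι →₀ ℕ,
      Finsupp.weight w d + Finsupp.weight w e = w i ∧
      y = MvPolynomial.monomial d (1 : k) ⊗ₜ[k] MvPolynomial.monomial e (1 : k)} := by
    intro i
    refine comul_span root htJ w hw (- root i) (w i) (by rw [map_neg, hw]) _ (hwt _ _ ?_)
    exact MvPolynomial.isWeightedHomogeneous_X k _ i
  have hmod : ∀ f, Algebra.TensorProduct.map (gaπ k (p ^ r)) (gaπ k (p ^ r))
      (Algebra.TensorProduct.map L L (comul f)) =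
      Algebra.TensorProduct.map (gaπ k (p ^ r)) (gaπ k (p ^ r)) (gaComul k (L f)) := by
    intro f
    have h1 := AlgHom.congr_fun hψΔ f
    have h2 := AlgHom.congr_fun hΔQ (L f)
    simp only [AlgHom.comp_apply] at h1 h2
    rw [← h2]
    have h3 : gaπ k (p ^ r) (L f) = ψ f := AlgHom.congr_fun hπL f
    rw [h3, ← h1, ← hπL, Algebra.TensorProduct.map_comp]
    rfl
  have hdeg : ∀ i n, (L (MvPolynomial.X i)).coeff n ≠ 0 → n < p ^ r := by
    intro i n hn
    by_contra hlt
    apply hn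
    have := Polynomial.mem_degreeLT.1 (hL i).1
    exact Polynomial.coeff_eq_zero_of_degree_lt (this.trans_le (by exact_mod_cast not_lt.1 hlt))
  have hpos : ∀ d : ι →₀ ℕ, d ≠ 0 → 1 ≤ Finsupp.weight w d := by
    intro d hd
    obtain ⟨i, hi⟩ := Finsupp.ne_iff.1 hd
    exact (hw1 i).trans (Finsupp.le_weight_of_ne_zero' w (by simpa using hi))
  have hLone : ∀ j, 1 ≤ j → ∀ d : ι →₀ ℕ, (L (MvPolynomial.monomial d 1)).coeff j ≠ 0 →
      d ≠ 0 := by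
    rintro j hj d hd rfl
    have h1 : MvPolynomial.monomial (0 : ι →₀ ℕ) (1 : k) = 1 := rfl
    rw [h1, map_one, Polynomial.coeff_one] at hd
    have h2 : j ≠ 0 := by omega
    simp [h2] at hd
  have hA : ∀ h i, w i = h → AA k p r (w i) (L (MvPolynomial.X i)) := by
    intro h
    induction h using Nat.strong_induction_on with
    | _ h ih =>
      intro i hi n hn
      by_cases hn0 : n = 0
      · subst hn0; exact DD_zero _ _ _
      have hnlt := hdeg i n hn
      obtain ⟨v, hv, hv'⟩ := exists_choose hp n hn0
      have hvr : v < r := (Nat.pow_lt_pow_iff_right hp.one_lt).1 (hv.trans_lt hnlt)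
      by_cases hnv : n = p ^ v
      · rw [hnv]; exact DD_pow hvr (hw1 i)
      have hpv : 0 < p ^ v := pow_pos hp.pos v
      obtain ⟨l, hl⟩ := Nat.exists_eq_add_of_le hv
      have hne : CC k (p ^ v) l (Algebra.TensorProduct.map L L (comul (MvPolynomial.X i))) ≠ 0 := by
        rw [CC_quot k (m := p ^ r) (by omega) (by omega) _ _ (hmod _), CC_comul, ← hl]
        refine mul_ne_zero ?_ hn
        rwa [Ne, CharP.cast_eq_zero_iff k p]
      obtain ⟨d, e, hde, hd, he⟩ := CC_span L w (w i) _ _ _ (hspan i) hne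
      have hd1 := hpos d (hLone _ hpv d hd)
      have he1 := hpos e (hLone l (by omega) e he)
      have hDd : AA k p r _ _ := AA_monomial L w d fun i' hi' => 
        ih (w i') (by have := Finsupp.le_weight_of_ne_zero' w hi'; omega) i' rfl
      have hDe : AA k p r _ _ := AA_monomial L w e fun i' hi' => 
        ih (w i') (by have := Finsupp.le_weight_of_ne_zero' w hi'; omega) i' rfl
      rw [hl, ← hde]
      exact DD_add (hDd _ hd) (hDe _ he)
  constructor
  · apply MvPolynomial.algHom_ext
    intro i
    simp only [AlgHom.comp_apply]
    apply CC_ext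
    intro j l
    by_cases hjl : j < p ^ r ∧ l < p ^ r
    · exact CC_quot k hjl.1 hjl.2 _ _ (hmod _)
    · have h1 : CC k j l (gaComul k (L (MvPolynomial.X i))) = 0 := by
        rw [CC_comul]
        by_contra hne
        have := hdeg i _ (right_ne_zero_of_mul hne)
        omega
      rw [h1]
      by_contra hne
      obtain ⟨d, e, hde, hd, he⟩ := CC_span L w (w i) _ _ _ (hspan i) hne
      have := hwp i
      have h2 := DD_lt hr (by omega) (AA_monomial L w d (fun i' _ => hA _ i' rfl) _ hd)
      have h3 := DD_lt hr (by omega) (AA_monomial L w e (fun i' _ => hA _ i' rfl) _ he)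
      exact hjl ⟨h2, h3⟩
  · rw [← hεQ, AlgHom.comp_assoc, hπL, hψε]

end Stmt5
end
end

section
/- Assume the nilpotence class of U is less than p, and let φ : 𝔾_{a(r)} → U be a homomorphism of affine group schemes with comorphism φ*. Then the lifted Hopf algebra homomorphism φ*_Y : k[U] → k[t] is independent both of the chosen total ordering of the positive roots in Φ⁺ \ Φ_J⁺ and of the choice of root homomorphisms u_α : 𝔾_a → G. -/
/-!
STATEMENT 6 (Proposition 2.7, second part): same setting as Statement 5.  A different
choice of total ordering of the roots in `Φ⁺ \ Φ_J⁺` and/or of root homomorphisms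
`u_α : 𝔾_a → G` amounts to a different choice `Y' = {Y'_{α_{τ(1)}},…,Y'_{α_{τ(n)}}}` of
free algebra generators of `k[U]` (for a permutation `τ` of the roots), where `Y'_α`
again has `T`-weight `-α`.  The claim is that the lifted Hopf algebra homomorphism is
unchanged: the lift of `φ*` computed with respect to the generators `Y'` equals the lift
`φ*_Y` computed with respect to `Y`.
-/




noncomputable section

open Polynomial MvPolynomial TensorProduct
open scoped TensorProduct

namespace Stmt6

variable (k : Type) [Field k]

/-- The comultiplication of `k[t]`: `Δ t = t ⊗ 1 + 1 ⊗ t`. -/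
def gaComul : Polynomial k →ₐ[k] Polynomial k ⊗[k] Polynomial k :=
  Polynomial.aeval (Polynomial.X ⊗ₜ[k] (1 : Polynomial k) + (1 : Polynomial k) ⊗ₜ[k] Polynomial.X)

/-- The counit of `k[t]`: evaluation at `0`. -/
def gaCounit : Polynomial k →ₐ[k] k := Polynomial.aeval 0

/-- The Hopf ideal `(t^m)` of `k[t]`. -/
def gaI (m : ℕ) : Ideal (Polynomial k) := Ideal.span {Polynomial.X ^ m}

/-- The canonical projection `π : k[t] → k[t]/(t^m)`. -/
def gaπ (m : ℕ) : Polynomial k →ₐ[k] Polynomial k ⧸ gaI k m :=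
  Ideal.Quotient.mkₐ k (gaI k m)

variable (ι Λ : Type) [AddCommGroup Λ]

/-- The `T`-weight space `k[U]_λ`:  `k[U] = k[Y_{α₁},…,Y_{α_n}]` with `Y_{α_i}` of weight
`-α_i`, so `k[U]_λ` is spanned by the monomials of total weight `λ` for the weight
function `i ↦ -root i`. -/
def wtSub (root : ι → Λ) (lam : Λ) : Submodule k (MvPolynomial ι k) :=
  MvPolynomial.weightedHomogeneousSubmodule k (fun i => - root i) lam

/-- The counit (augmentation) of `k[U]`: evaluation at the identity of `U`, i.e. at the
point all of whose root coordinates are `0`. -/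
def uCounit : MvPolynomial ι k →ₐ[k] k := MvPolynomial.aeval (fun _ : ι => (0 : k))

/-- The subspace `k[U]_{<p} = Σ_{|ht_J(λ)| < p} k[U]_λ`. -/
def uLt (root : ι → Λ) (htJ : Λ →+ ℤ) (p : ℕ) : Submodule k (MvPolynomial ι k) :=
  ⨆ (lam : Λ) (_ : (htJ lam).natAbs < p), wtSub k ι Λ root lam

lemma choose_ppow (p : ℕ) [Fact p.Prime] (s : ℕ) : ∀ j : ℕ, (j.choose (p ^ s)) ≡ j / p ^ s [MOD p] := by
  induction s with
  | zero => intro j; simp [Nat.ModEq]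
  | succ s ih =>
    intro j
    have hp : 0 < p := (Fact.out : p.Prime).pos
    have h := Choose.choose_modEq_choose_mod_mul_choose_div_nat (n := j) (k := p ^ (s+1)) (p := p)
    have e1 : p ^ (s+1) % p = 0 := by rw [pow_succ]; simp
    have e2 : p ^ (s+1) / p = p ^ s := by rw [pow_succ]; exact Nat.mul_div_cancel _ hp
    rw [e1, e2, Nat.choose_zero_right, one_mul] at h
    refine h.trans ((ih (j / p)).trans ?_)
    rw [Nat.div_div_eq_div_mul, pow_succ, mul_comm p]

lemma choose_ne (k : Type) [Field k] (p : ℕ) (hp : p.Prime) [CharP k p] (s j : ℕ)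
    (h1 : p ^ s ≤ j) (h2 : j < p ^ (s+1)) : ((j.choose (p ^ s) : ℕ) : k) ≠ 0 := by
  have : Fact p.Prime := ⟨hp⟩
  intro h
  rw [CharP.cast_eq_zero_iff k p] at h
  have h3 := (choose_ppow p s j).symm.trans ((Nat.modEq_zero_iff_dvd).2 h)
  have hP : 0 < p ^ s := pow_pos hp.pos s
  have h4 : 0 < j / p ^ s := Nat.div_pos h1 hP
  have h5 : j / p ^ s < p := by
    rw [Nat.div_lt_iff_lt_mul hP]; rw [pow_succ, mul_comm] at h2; exact h2
  exact absurd (Nat.le_of_dvd h4 ((Nat.modEq_zero_iff_dvd).1 h3)) (by omega)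

/-- tensor product of functionals -/
def tf {k : Type} [Field k] {M : Type} [AddCommGroup M] [Module k M]
    (a b : M →ₗ[k] k) : M ⊗[k] M →ₗ[k] k :=
  (TensorProduct.lid k k).toLinearMap ∘ₗ TensorProduct.map a b

lemma tf_tmul {k : Type} [Field k] {M : Type} [AddCommGroup M] [Module k M]
    (a b : M →ₗ[k] k) (x y : M) : tf a b (x ⊗ₜ y) = a x * b y := by
  simp [tf]

lemma tf_comul (k : Type) [Field k] (a b : ℕ) (g : Polynomial k) :
    tf (Polynomial.lcoeff k a) (Polynomial.lcoeff k b) (gaComul k g)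
      = ((a + b).choose a : k) * g.coeff (a + b) := by
  induction g using Polynomial.induction_on' with
  | add f g hf hg => simp only [map_add, hf, hg, Polynomial.coeff_add, mul_add]
  | monomial n c =>
    rw [← Polynomial.C_mul_X_pow_eq_monomial, ← Polynomial.smul_eq_C_mul, map_smul, map_smul]
    have : gaComul k (Polynomial.X ^ n) = ∑ m ∈ Finset.range (n+1),
        (n.choose m : k) • ((Polynomial.X ^ m : Polynomial k) ⊗ₜ[k] (Polynomial.X ^ (n - m) : Polynomial k)) := by
      rw [map_pow, gaComul, Polynomial.aeval_X, add_pow]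
      refine Finset.sum_congr rfl fun m _ => ?_
      rw [Algebra.TensorProduct.tmul_pow, Algebra.TensorProduct.tmul_pow,
        Algebra.TensorProduct.tmul_mul_tmul, one_pow, one_pow, one_mul, mul_one, mul_comm,
        ← nsmul_eq_mul, Nat.cast_smul_eq_nsmul]
    rw [this, map_sum]
    simp only [map_smul, tf_tmul, Polynomial.lcoeff_apply, Polynomial.coeff_X_pow, smul_eq_mul,
      Polynomial.coeff_smul]
    by_cases hn : a + b = n
    · subst hn
      rw [Finset.sum_eq_single a]
      · simp; ring
      · intro m _ hm; simp [Ne.symm hm]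
      · intro h; exact absurd (Finset.mem_range.2 (by omega)) h
    · rw [Finset.sum_eq_zero]
      · simp [hn]
      · intro m hm
        have := Finset.mem_range.1 hm
        by_cases h1 : a = m
        · have : ¬ b = n - m := by omega
          simp [this]
        · simp [h1]

lemma exists_coeff (k : Type) [Field k] (q : ℕ) :
    ∃ c : ℕ → (Polynomial k ⧸ gaI k q) →ₗ[k] k,
      ∀ j < q, ∀ g, c j (gaπ k q g) = g.coeff j := by
  have hs : Function.Surjective (gaπ k q).toLinearMap := Ideal.Quotient.mkₐ_surjective k (gaI k q)
  obtain ⟨s, hs⟩ := LinearMap.exists_rightInverse_of_surjective (gaπ k q).toLinearMap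
    (LinearMap.range_eq_top.2 hs)
  refine ⟨fun j => Polynomial.lcoeff k j ∘ₗ s, fun j hj g => ?_⟩
  have h1 : gaπ k q (s (gaπ k q g)) = gaπ k q g := LinearMap.congr_fun hs (gaπ k q g)
  have h2 : s (gaπ k q g) - g ∈ gaI k q := Ideal.Quotient.eq.1 h1
  replace h2 := Polynomial.X_pow_dvd_iff.1 (Ideal.mem_span_singleton.1 h2)
  have h3 := h2 j hj
  rw [Polynomial.coeff_sub, sub_eq_zero] at h3
  exact h3

lemma eq_of_pi (k : Type) [Field k] (q : ℕ) (f g : Polynomial k)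
    (hf : f ∈ Polynomial.degreeLT k q) (hg : g ∈ Polynomial.degreeLT k q)
    (h : gaπ k q f = gaπ k q g) : f = g := by
  have h2 : f - g ∈ gaI k q := Ideal.Quotient.eq.1 h
  replace h2 := Polynomial.X_pow_dvd_iff.1 (Ideal.mem_span_singleton.1 h2)
  ext j
  by_cases hj : j < q
  · have h3 := h2 j hj
    rwa [Polynomial.coeff_sub, sub_eq_zero] at h3
  · rw [Polynomial.mem_degreeLT] at hf hg
    have hj' : (q : WithBot ℕ) ≤ j := by exact_mod_cast not_lt.1 hj
    rw [Polynomial.coeff_eq_zero_of_degree_lt (hf.trans_le hj'),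
      Polynomial.coeff_eq_zero_of_degree_lt (hg.trans_le hj')]

lemma ht_weight (ι Λ : Type) [AddCommGroup Λ] (root : ι → Λ) (htJ : Λ →+ ℤ) (d : ι →₀ ℕ) :
    htJ (Finsupp.weight (fun i => - root i) d) = - ∑ i ∈ d.support, (d i : ℤ) * htJ (root i) := by
  rw [Finsupp.weight_apply, Finsupp.sum, map_sum, ← Finset.sum_neg_distrib]
  refine Finset.sum_congr rfl fun i _ => ?_
  simp

lemma const_of_ht (k : Type) [Field k] (ι Λ : Type) [AddCommGroup Λ] (root : ι → Λ)
    (htJ : Λ →+ ℤ) (hroot : ∀ i, 1 ≤ htJ (root i)) (lam : Λ) (h : 0 ≤ htJ lam)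
    (a : MvPolynomial ι k) (ha : a ∈ wtSub k ι Λ root lam) :
    a = algebraMap k _ (MvPolynomial.coeff 0 a) := by
  classical
  rw [MvPolynomial.algebraMap_eq]
  ext d
  rw [MvPolynomial.coeff_C]
  split_ifs with hd
  · rw [hd]
  · by_contra hne
    have hw := ha hne
    have h1 := ht_weight ι Λ root htJ d
    rw [hw] at h1
    obtain ⟨i, hi⟩ : ∃ i, i ∈ d.support := by
      rw [← Finset.Nonempty, Finsupp.support_nonempty_iff]; exact fun h => hd h.symm
    have hpos : 0 < ∑ i ∈ d.support, (d i : ℤ) * htJ (root i) := by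
      refine Finset.sum_pos (fun i hi => ?_) ⟨i, hi⟩
      have := Nat.pos_of_ne_zero (Finsupp.mem_support_iff.1 hi)
      have := hroot i
      positivity
    omega

theorem stmt_6 [IsAlgClosed k] (p r : ℕ) (hp : p.Prime) [CharP k p] (hr : 1 ≤ r)
    [Fintype ι]
    (root : ι → Λ) (htJ : Λ →+ ℤ) (hroot : ∀ i, 1 ≤ htJ (root i))
    -- the nilpotence class of `U` (equal to `max ht_J(α)`) is less than `p`:
    (hnil : ∀ i, htJ (root i) < (p : ℤ))
    (comul : MvPolynomial ι k →ₐ[k] MvPolynomial ι k ⊗[k] MvPolynomial ι k)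
    (hcul : ∀ f, (TensorProduct.lid k (MvPolynomial ι k))
        ((TensorProduct.map (uCounit k ι).toLinearMap
          (LinearMap.id : MvPolynomial ι k →ₗ[k] MvPolynomial ι k)) (comul f)) = f)
    (hcur : ∀ f, (TensorProduct.rid k (MvPolynomial ι k))
        ((TensorProduct.map (LinearMap.id : MvPolynomial ι k →ₗ[k] MvPolynomial ι k)
          (uCounit k ι).toLinearMap) (comul f)) = f)
    (hwt : ∀ (lam : Λ), ∀ x ∈ wtSub k ι Λ root lam,
        comul x ∈ ⨆ (pr : Λ × Λ) (_ : pr.1 + pr.2 = lam),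
          LinearMap.range (TensorProduct.map (wtSub k ι Λ root pr.1).subtype
            (wtSub k ι Λ root pr.2).subtype))
    (ΔQ : (Polynomial k ⧸ gaI k (p ^ r)) →ₐ[k]
        (Polynomial k ⧸ gaI k (p ^ r)) ⊗[k] (Polynomial k ⧸ gaI k (p ^ r)))
    (hΔQ : ΔQ.comp (gaπ k (p ^ r)) =
        (Algebra.TensorProduct.map (gaπ k (p ^ r)) (gaπ k (p ^ r))).comp (gaComul k))
    (εQ : (Polynomial k ⧸ gaI k (p ^ r)) →ₐ[k] k)
    (hεQ : εQ.comp (gaπ k (p ^ r)) = gaCounit k)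
    (ψ : MvPolynomial ι k →ₐ[k] Polynomial k ⧸ gaI k (p ^ r))
    (hψΔ : (Algebra.TensorProduct.map ψ ψ).comp comul = ΔQ.comp ψ)
    (hψε : εQ.comp ψ = uCounit k ι)
    -- `L = φ*_Y`, the lift of `φ*` with respect to the generators `Y`:
    (L : MvPolynomial ι k →ₐ[k] Polynomial k)
    (hL : ∀ i : ι, L (MvPolynomial.X i) ∈ Polynomial.degreeLT k (p ^ r) ∧
        gaπ k (p ^ r) (L (MvPolynomial.X i)) = ψ (MvPolynomial.X i))
    -- a new choice of total order (the permutation `τ`) and of root homomorphisms,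
    -- giving new free algebra generators `Y'` with `Y'_α` of weight `-α`:
    (τ : Equiv.Perm ι) (Y' : ι → MvPolynomial ι k)
    (hY'wt : ∀ i, Y' i ∈ wtSub k ι Λ root (- root (τ i)))
    (hY'free : Function.Bijective
        ⇑(MvPolynomial.aeval Y' : MvPolynomial ι k →ₐ[k] MvPolynomial ι k))
    -- `L' = φ*_{Y'}`, the lift of `φ*` with respect to the generators `Y'`:
    (L' : MvPolynomial ι k →ₐ[k] Polynomial k)
    (hL' : ∀ i : ι, L' (Y' i) ∈ Polynomial.degreeLT k (p ^ r) ∧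
        gaπ k (p ^ r) (L' (Y' i)) = ψ (Y' i)) :
    -- conclusion: the lift is independent of these choices
    L' = L := by
  obtain ⟨s, rfl⟩ : ∃ s, r = s + 1 := ⟨r - 1, by omega⟩
  obtain ⟨c, hc⟩ := exists_coeff k (p ^ (s+1))
  have hP : 0 < p ^ s := pow_pos hp.pos s
  have hq : p ^ (s+1) = p * p ^ s := by rw [pow_succ, mul_comm]
  have base : ∀ lam, 0 ≤ htJ lam → ∀ a ∈ wtSub k ι Λ root lam, ∀ j, 0 < j → j < p ^ (s+1) →
      c j (ψ a) = 0 := by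
    intro lam hl a ha j hj0 hj
    rw [const_of_ht k ι Λ root htJ hroot lam hl a ha, AlgHom.commutes,
      ← AlgHom.commutes (gaπ k (p ^ (s+1))), hc j hj, Polynomial.algebraMap_apply,
      Polynomial.coeff_C, if_neg hj0.ne']
  have key : ∀ h : ℕ, ∀ lam, -(h : ℤ) ≤ htJ lam → ∀ a ∈ wtSub k ι Λ root lam, ∀ j,
      h * p ^ s < j → j < p ^ (s+1) → c j (ψ a) = 0 := by
    intro h
    induction h with
    | zero =>
      intro lam hl a ha j hj0 hj
      exact base lam (by simpa using hl) a ha j (by omega) hj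
    | succ h ih =>
      intro lam hl f hf j hj0 hj
      have hjP : p ^ s ≤ j := by nlinarith
      have hjP2 : h * p ^ s < j - p ^ s := by
        rw [Nat.lt_sub_iff_add_lt]; linarith
      obtain ⟨g, hg⟩ : ∃ g, gaπ k (p ^ (s+1)) g = ψ f :=
        Ideal.Quotient.mkₐ_surjective k (gaI k (p ^ (s+1))) (ψ f)
      have hz : tf (c (p ^ s)) (c (j - p ^ s)) ((Algebra.TensorProduct.map ψ ψ) (comul f)) = 0 := by
        have hle : (⨆ (pr : Λ × Λ) (_ : pr.1 + pr.2 = lam),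
            LinearMap.range (TensorProduct.map (wtSub k ι Λ root pr.1).subtype
              (wtSub k ι Λ root pr.2).subtype)) ≤
            LinearMap.ker (tf (c (p ^ s)) (c (j - p ^ s)) ∘ₗ
              (Algebra.TensorProduct.map ψ ψ).toLinearMap) := by
          refine iSup₂_le fun pr hpr => ?_
          rw [LinearMap.range_le_ker_iff]
          refine TensorProduct.ext' fun a b => ?_
          have hsum : htJ pr.1 + htJ pr.2 = htJ lam := by rw [← map_add, hpr]
          simp only [LinearMap.comp_apply, TensorProduct.map_tmul, Submodule.subtype_apply,
            AlgHom.toLinearMap_apply, Algebra.TensorProduct.map_tmul, tf_tmul,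
            LinearMap.zero_apply]
          by_cases h0 : 0 ≤ htJ pr.1
          · rw [base pr.1 h0 a a.2 _ hP (by omega), zero_mul]
          · rw [ih pr.2 (by push_cast at hl; omega) b b.2 _ hjP2 (by omega), mul_zero]
        exact hle (hwt lam f hf)
      have e1 : (Algebra.TensorProduct.map ψ ψ) (comul f) = ΔQ (ψ f) := AlgHom.congr_fun hψΔ f
      have e2 : ΔQ (gaπ k (p ^ (s+1)) g) = (Algebra.TensorProduct.map (gaπ k (p ^ (s+1)))
        (gaπ k (p ^ (s+1)))) (gaComul k g) := AlgHom.congr_fun hΔQ g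
      have e3 : ∀ z, tf (c (p ^ s)) (c (j - p ^ s)) ((Algebra.TensorProduct.map
          (gaπ k (p ^ (s+1))) (gaπ k (p ^ (s+1)))) z) =
          tf (Polynomial.lcoeff k (p ^ s)) (Polynomial.lcoeff k (j - p ^ s)) z := by
        intro z
        induction z using TensorProduct.induction_on with
        | zero => simp only [map_zero]
        | add x y hx hy => simp only [map_add, hx, hy]
        | tmul x y =>
          rw [Algebra.TensorProduct.map_tmul, tf_tmul, tf_tmul, hc _ (by omega), hc _ (by omega)]
          rfl
      rw [e1, ← hg, e2, e3, tf_comul, Nat.add_sub_cancel' hjP] at hz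
      rw [← hg, hc j hj]
      exact (mul_eq_zero.1 hz).resolve_left (choose_ne k p hp s j hjP hj)
  have hLψ : ∀ f, gaπ k (p ^ (s+1)) (L f) = ψ f := by
    have : (gaπ k (p ^ (s+1))).comp L = ψ := MvPolynomial.algHom_ext fun i => (hL i).2
    intro f; rw [← this]; rfl
  have hdegX : ∀ i, (L (MvPolynomial.X i)).natDegree ≤ (htJ (root i)).toNat * p ^ s := by
    intro i
    rw [Polynomial.natDegree_le_iff_coeff_eq_zero]
    intro j hj
    by_cases hjq : j < p ^ (s+1)
    · rw [← hc j hjq, hLψ]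
      refine key (htJ (root i)).toNat (- root i) ?_ _ ?_ j hj hjq
      · rw [map_neg]; have := hroot i; omega
      · exact MvPolynomial.isWeightedHomogeneous_X k (fun i => - root i) i
    · have h1 := (hL i).1
      rw [Polynomial.mem_degreeLT] at h1
      exact Polynomial.coeff_eq_zero_of_degree_lt
        (h1.trans_le (by exact_mod_cast not_lt.1 hjq))
  have hdeg : ∀ m, ∀ f ∈ wtSub k ι Λ root (- root m),
      (L f).natDegree ≤ (htJ (root m)).toNat * p ^ s := by
    intro m f hf
    rw [f.as_sum, map_sum]
    refine Polynomial.natDegree_sum_le_of_forall_le _ _ fun d hd => ?_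
    have hw : Finsupp.weight (fun i => - root i) d = - root m :=
      hf (MvPolynomial.mem_support_iff.1 hd)
    have h1 := ht_weight ι Λ root htJ d
    rw [hw, map_neg, neg_inj] at h1
    have h2 : (htJ (root m)).toNat = ∑ i ∈ d.support, d i * (htJ (root i)).toNat := by
      zify
      rw [Int.toNat_of_nonneg (by have := hroot m; omega), h1]
      refine Finset.sum_congr rfl fun i _ => ?_
      rw [Int.toNat_of_nonneg (by have := hroot i; omega)]
    rw [MvPolynomial.monomial_eq, map_mul, ← MvPolynomial.algebraMap_eq, AlgHom.commutes,
      Polynomial.algebraMap_apply]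
    refine (Polynomial.natDegree_C_mul_le _ _).trans ?_
    rw [Finsupp.prod, map_prod]
    refine (Polynomial.natDegree_prod_le _ _).trans ?_
    rw [h2, Finset.sum_mul]
    refine Finset.sum_le_sum fun i _ => ?_
    rw [map_pow]
    refine Polynomial.natDegree_pow_le.trans ?_
    rw [mul_assoc]
    exact Nat.mul_le_mul_left _ (hdegX i)
  have hY : ∀ i, L' (Y' i) = L (Y' i) := by
    intro i
    refine eq_of_pi k (p ^ (s+1)) _ _ (hL' i).1 ?_ ((hL' i).2.trans (hLψ _).symm)
    rw [Polynomial.mem_degreeLT]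
    refine Polynomial.degree_le_natDegree.trans_lt ?_
    have h1 := hdeg (τ i) (Y' i) (hY'wt i)
    have h2 : (htJ (root (τ i))).toNat < p := by
      have := hroot (τ i); have := hnil (τ i); omega
    have h3 : (L (Y' i)).natDegree < p ^ (s+1) := by
      rw [hq]; exact h1.trans_lt (Nat.mul_lt_mul_of_pos_right h2 hP)
    exact_mod_cast h3
  have hcomp : L'.comp (MvPolynomial.aeval Y') = L.comp (MvPolynomial.aeval Y') := by
    refine MvPolynomial.algHom_ext fun i => ?_
    simpa using hY i
  refine AlgHom.ext fun f => ?_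
  obtain ⟨g, rfl⟩ := hY'free.2 f
  exact AlgHom.congr_fun hcomp g

end Stmt6
end
end

section
/- Assume the nilpotence class of U is less than p. Then exp^r_U is compatible with the conjugation action of P: for every x ∈ P(k) and every φ ∈ Hom_{gs/k}(𝔾_{a(r)}, U), one has exp^r_U(x · φ) = x · exp^r_U(φ), where x · φ denotes the composition of φ with conjugation by x. -/
/-!
STATEMENT 10 (Theorem 2.9(3)): setting as in Statements 1, 2 and 9, with the nilpotence
class of `U` less than `p`.  For `x ∈ P(k)` and `φ ∈ Hom_{gs/k}(𝔾_{a(r)}, U)`, the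
conjugate `x ⬝ φ` has comorphism `φ* ∘ x*`, where `x* = σ x` is the comorphism of
conjugation by `x` on `U`.  The claim `exp^r_U(x ⬝ φ) = x ⬝ exp^r_U(φ)` says on
comorphisms: the lift of `φ* ∘ σ x` with respect to the generators `Y` equals
`(lift of φ*) ∘ σ x`.
-/

noncomputable section

open Polynomial MvPolynomial TensorProduct
open scoped TensorProduct

namespace Stmt10

variable (k : Type) [Field k] (ι Λ : Type) [AddCommGroup Λ]
variable (Tg Pg : Type) [Group Tg] [Group Pg]
variable (ιT : Tg →* Pg)
variable (σ : Pg →* (MvPolynomial ι k ≃ₐ[k] MvPolynomial ι k))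
variable (χ : Λ → (Tg →* kˣ))

/-- The comultiplication of `k[t]`: `Δ t = t ⊗ 1 + 1 ⊗ t`. -/
def gaComul : Polynomial k →ₐ[k] Polynomial k ⊗[k] Polynomial k :=
  Polynomial.aeval (Polynomial.X ⊗ₜ[k] (1 : Polynomial k) + (1 : Polynomial k) ⊗ₜ[k] Polynomial.X)

/-- The counit of `k[t]`: evaluation at `0`. -/
def gaCounit : Polynomial k →ₐ[k] k := Polynomial.aeval 0

/-- The Hopf ideal `(t^m)` of `k[t]`. -/
def gaI (m : ℕ) : Ideal (Polynomial k) := Ideal.span {Polynomial.X ^ m}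

/-- The canonical projection `π : k[t] → k[t]/(t^m)`. -/
def gaπ (m : ℕ) : Polynomial k →ₐ[k] Polynomial k ⧸ gaI k m :=
  Ideal.Quotient.mkₐ k (gaI k m)

/-- The counit (augmentation) of `k[U]`. -/
def uCounit : MvPolynomial ι k →ₐ[k] k := MvPolynomial.aeval (fun _ : ι => (0 : k))

/-- The weight space `k[U]_λ`: the `χ λ`-eigenspace of the `T(k)`-action on `k[U]`. -/
def wtSp (lam : Λ) : Submodule k (MvPolynomial ι k) where
  carrier := {f | ∀ s : Tg, σ (ιT s) f = ((χ lam s : kˣ) : k) • f}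
  add_mem' := by
    intro a b ha hb s
    rw [map_add, ha s, hb s, smul_add]
  zero_mem' := by
    intro s
    rw [map_zero, smul_zero]
  smul_mem' := by
    intro c f hf s
    rw [map_smul, hf s, smul_comm]

theorem chi_zero (hχadd : ∀ lam mu s, χ (lam + mu) s = χ lam s * χ mu s) (s : Tg) :
    χ 0 s = 1 := by
  have := hχadd 0 0 s
  simpa using this

theorem chi_nsmul (hχadd : ∀ lam mu s, χ (lam + mu) s = χ lam s * χ mu s) (s : Tg)
    (e : ℕ) (l : Λ) : χ (e • l) s = χ l s ^ e := by
  induction e with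
  | zero => simpa using chi_zero k Λ Tg χ hχadd s
  | succ n ih => rw [succ_nsmul, hχadd, ih, pow_succ]

theorem chi_sum (hχadd : ∀ lam mu s, χ (lam + mu) s = χ lam s * χ mu s) (s : Tg)
    (S : Finset ι) (g : ι → Λ) : χ (∑ i ∈ S, g i) s = ∏ i ∈ S, χ (g i) s := by
  classical
  induction S using Finset.induction_on with
  | empty => simpa using chi_zero k Λ Tg χ hχadd s
  | insert a S ha ih => rw [Finset.sum_insert ha, Finset.prod_insert ha, hχadd, ih]

theorem diag_monomial (A : MvPolynomial ι k →ₐ[k] MvPolynomial ι k) (a : ι → k)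
    (hA : ∀ i, A (MvPolynomial.X i) = a i • MvPolynomial.X i) (d : ι →₀ ℕ) (c : k) :
    A (MvPolynomial.monomial d c) = (d.prod fun i e => a i ^ e) • MvPolynomial.monomial d c := by
  rw [MvPolynomial.monomial_eq, map_mul]
  rw [Finsupp.prod, Finsupp.prod, map_prod]
  simp only [map_pow, hA, _root_.smul_pow]
  rw [Finset.prod_smul, mul_smul_comm]
  congr 2
  exact MvPolynomial.algHom_C A c

theorem diag_coeff (A : MvPolynomial ι k →ₐ[k] MvPolynomial ι k) (a : ι → k)
    (hA : ∀ i, A (MvPolynomial.X i) = a i • MvPolynomial.X i) (d : ι →₀ ℕ)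
    (f : MvPolynomial ι k) :
    MvPolynomial.coeff d (A f) = (d.prod fun i e => a i ^ e) * MvPolynomial.coeff d f := by
  classical
  induction f using MvPolynomial.induction_on' with
  | monomial u c =>
    rw [diag_monomial k ι A a hA, MvPolynomial.coeff_smul, smul_eq_mul,
      MvPolynomial.coeff_monomial]
    split_ifs with h
    · rw [h]
    · simp
  | add p q hp hq => rw [map_add, MvPolynomial.coeff_add, hp, hq, MvPolynomial.coeff_add, mul_add]

theorem wt_support (root : ι → Λ)
    (hχadd : ∀ lam mu s, χ (lam + mu) s = χ lam s * χ mu s)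
    (hχinj : ∀ lam mu : Λ, (∀ s, χ lam s = χ mu s) → lam = mu)
    (hgen : ∀ (s : Tg) (i : ι),
        σ (ιT s) (MvPolynomial.X i) = ((χ (- root i) s : kˣ) : k) • MvPolynomial.X i)
    (lam : Λ) (f : MvPolynomial ι k) (hf : f ∈ wtSp k ι Λ Tg Pg ιT σ χ lam)
    (d : ι →₀ ℕ) (hd : MvPolynomial.coeff d f ≠ 0) :
    lam = ∑ i ∈ d.support, d i • (- root i) := by
  apply hχinj
  intro s
  have h1 := diag_coeff k ι (σ (ιT s)).toAlgHom _ (hgen s) d f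
  have h2 : (σ (ιT s)).toAlgHom f = ((χ lam s : kˣ) : k) • f := hf s
  rw [h2, MvPolynomial.coeff_smul, smul_eq_mul] at h1
  have h3 := mul_right_cancel₀ hd h1
  rw [chi_sum k ι Λ Tg χ hχadd]
  apply Units.ext
  rw [h3, Finsupp.prod, Units.coe_prod]
  apply Finset.prod_congr rfl
  intro i _
  rw [chi_nsmul k Λ Tg χ hχadd, Units.val_pow_eq_pow_val]

/-- coefficient functional on the quotient -/
def cQ (m n : ℕ) (h : n < m) : (Polynomial k ⧸ gaI k m) →ₗ[k] k :=
  Submodule.liftQ ((gaI k m).restrictScalars k) (Polynomial.lcoeff k n) (by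
    intro g hg
    have hg' : g ∈ gaI k m := hg
    rw [gaI, Ideal.mem_span_singleton] at hg'
    rw [LinearMap.mem_ker, Polynomial.lcoeff_apply]
    exact Polynomial.X_pow_dvd_iff.mp hg' n h)

theorem cQ_pi (m n : ℕ) (h : n < m) (g : Polynomial k) :
    cQ k m n h (gaπ k m g) = g.coeff n := rfl

theorem coeff_comul (a b : ℕ) (g : Polynomial k) :
    (TensorProduct.lid k k) (TensorProduct.map (Polynomial.lcoeff k a) (Polynomial.lcoeff k b)
      (gaComul k g)) = ((a + b).choose a : k) * g.coeff (a + b) := by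
  induction g using Polynomial.induction_on' with
  | add p q hp hq => rw [map_add, map_add, map_add, hp, hq, Polynomial.coeff_add, mul_add]
  | monomial n c =>
    rw [← Polynomial.C_mul_X_pow_eq_monomial, ← Polynomial.smul_eq_C_mul, map_smul, map_smul,
      map_smul, gaComul, map_pow, Polynomial.aeval_X, (Commute.all _ _).add_pow, map_sum, map_sum]
    have : ∀ i ∈ Finset.range (n + 1), (TensorProduct.lid k k)
        (TensorProduct.map (Polynomial.lcoeff k a) (Polynomial.lcoeff k b)
        (((Polynomial.X : Polynomial k) ⊗ₜ[k] (1 : Polynomial k)) ^ i *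
          ((1 : Polynomial k) ⊗ₜ[k] (Polynomial.X : Polynomial k)) ^ (n - i) *
          ((n.choose i : ℕ) : Polynomial k ⊗[k] Polynomial k))) =
        if i = a then (if n = a + b then (n.choose a : k) else 0) else 0 := by
      intro i hi
      have hi' : i ≤ n := by simpa [Nat.lt_succ_iff] using hi
      rw [Algebra.TensorProduct.tmul_pow, Algebra.TensorProduct.tmul_pow, one_pow, one_pow,
        Algebra.TensorProduct.tmul_mul_tmul, one_mul, mul_one, mul_comm, ← nsmul_eq_mul,
        map_nsmul, map_nsmul, TensorProduct.map_tmul, TensorProduct.lid_tmul,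
        Polynomial.lcoeff_apply, Polynomial.lcoeff_apply, Polynomial.coeff_X_pow,
        Polynomial.coeff_X_pow]
      by_cases h1 : i = a
      · subst h1
        by_cases h2 : n = i + b
        · have : b = n - i := by omega
          simp [h2]
        · have : ¬ b = n - i := by omega
          simp [h2, this]
      · have : ¬ a = i := fun h => h1 h.symm
        simp [h1, this]
    rw [Finset.sum_congr rfl this, Finset.sum_ite_eq']
    by_cases h2 : n = a + b
    · subst h2
      simp [mul_comm]
    · have : ¬ a + b = n := fun h => h2 h.symm
      simp [h2, this, Polynomial.coeff_X_pow]

theorem choose_ppow (p : ℕ) (hp : p.Prime) (j n : ℕ) :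
    n.choose (p ^ j) ≡ n / p ^ j [MOD p] := by
  have := Fact.mk hp
  induction j generalizing n with
  | zero => simp; rfl
  | succ j ih =>
    have h := @Choose.choose_modEq_choose_mod_mul_choose_div_nat n (p ^ (j + 1)) p _
    rw [pow_succ, Nat.mul_mod_left, Nat.mul_div_cancel _ hp.pos, Nat.choose_zero_right,
      one_mul] at h
    rw [pow_succ, mul_comm, ← Nat.div_div_eq_div_mul, mul_comm]
    exact h.trans (ih _)

theorem choose_ne (p r n : ℕ) (hp : p.Prime) [CharP k p] (hn : n < p ^ (r + 1))
    (hn' : p ^ r ≤ n) : ((n.choose (p ^ r) : ℕ) : k) ≠ 0 := by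
  intro h
  rw [CharP.cast_eq_zero_iff k p] at h
  have h1 := (choose_ppow p hp r n).symm.trans ((Nat.modEq_zero_iff_dvd).2 h)
  rw [Nat.modEq_zero_iff_dvd] at h1
  have hpos : 0 < p ^ r := pow_pos hp.pos r
  have h2 : n / p ^ r < p := by
    rw [Nat.div_lt_iff_lt_mul hpos]; rwa [pow_succ, mul_comm] at hn
  have h3 : 0 < n / p ^ r := Nat.div_pos hn' hpos
  exact absurd (Nat.le_of_dvd h3 h1) (by omega)

theorem stmt_10 [IsAlgClosed k] (p r : ℕ) (hp : p.Prime) [CharP k p] (hr : 1 ≤ r)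
    [Fintype ι]
    -- the roots `α_i` of `U` and the height function `ht_J`
    (root : ι → Λ) (htJ : Λ →+ ℤ) (hroot : ∀ i, 1 ≤ htJ (root i))
    -- the nilpotence class of `U` (equal to `max ht_J(α)`) is less than `p`:
    (hnil : ∀ i, htJ (root i) < (p : ℤ))
    -- the comultiplication of `k[U]` and its counit laws:
    (comul : MvPolynomial ι k →ₐ[k] MvPolynomial ι k ⊗[k] MvPolynomial ι k)
    (hcul : ∀ f, (TensorProduct.lid k (MvPolynomial ι k))
        ((TensorProduct.map (uCounit k ι).toLinearMap
          (LinearMap.id : MvPolynomial ι k →ₗ[k] MvPolynomial ι k)) (comul f)) = f)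
    (hcur : ∀ f, (TensorProduct.rid k (MvPolynomial ι k))
        ((TensorProduct.map (LinearMap.id : MvPolynomial ι k →ₗ[k] MvPolynomial ι k)
          (uCounit k ι).toLinearMap) (comul f)) = f)
    -- `P(k)` acts by automorphisms of the group scheme `U`:
    (hσΔ : ∀ g : Pg, comul.comp (σ g).toAlgHom =
        (Algebra.TensorProduct.map (σ g).toAlgHom (σ g).toAlgHom).comp comul)
    (hσε : ∀ g : Pg, (uCounit k ι).comp (σ g).toAlgHom = uCounit k ι)
    -- characters of `T(k)` and the weights of the generators:
    (hχadd : ∀ lam mu s, χ (lam + mu) s = χ lam s * χ mu s)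
    (hχinj : ∀ lam mu : Λ, (∀ s, χ lam s = χ mu s) → lam = mu)
    (hgen : ∀ (s : Tg) (i : ι),
        σ (ιT s) (MvPolynomial.X i) = ((χ (- root i) s : kˣ) : k) • MvPolynomial.X i)
    -- each generator is a weight vector of weight `-α_i` for the grading used in the
    -- construction of the lift, and the `T`-eigenspace grading:
    (hXwt : ∀ i, MvPolynomial.X i ∈ wtSp k ι Λ Tg Pg ιT σ χ (- root i))
    -- the roots `α ∈ Φ⁺ ∪ Φ_J` and root subgroups of `P(k)`, generation, and [H, 27.2]:
    (κ : Type) (proot : κ → Λ) (hproot : ∀ j, 0 ≤ htJ (proot j))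
    (uelt : κ → Set Pg) (huinv : ∀ j, ∀ g ∈ uelt j, g⁻¹ ∈ uelt j)
    (hPgen : Subgroup.closure (Set.range ⇑ιT ∪ ⋃ j, uelt j) = (⊤ : Subgroup Pg))
    (hU : ∀ j, ∀ g ∈ uelt j, ∀ (lam : Λ), ∀ f ∈ wtSp k ι Λ Tg Pg ιT σ χ lam,
        σ g f ∈ ⨆ c : ℕ, wtSp k ι Λ Tg Pg ιT σ χ (lam + c • proot j))
    -- `T`-equivariance of the comultiplication on weight spaces:
    (hwt : ∀ (lam : Λ), ∀ x ∈ wtSp k ι Λ Tg Pg ιT σ χ lam,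
        comul x ∈ ⨆ (pr : Λ × Λ) (_ : pr.1 + pr.2 = lam),
          LinearMap.range (TensorProduct.map
            (wtSp k ι Λ Tg Pg ιT σ χ pr.1).subtype
            (wtSp k ι Λ Tg Pg ιT σ χ pr.2).subtype))
    -- the induced comultiplication and counit of `k[t]/(t^{p^r})`:
    (ΔQ : (Polynomial k ⧸ gaI k (p ^ r)) →ₐ[k]
        (Polynomial k ⧸ gaI k (p ^ r)) ⊗[k] (Polynomial k ⧸ gaI k (p ^ r)))
    (hΔQ : ΔQ.comp (gaπ k (p ^ r)) =
        (Algebra.TensorProduct.map (gaπ k (p ^ r)) (gaπ k (p ^ r))).comp (gaComul k))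
    (εQ : (Polynomial k ⧸ gaI k (p ^ r)) →ₐ[k] k)
    (hεQ : εQ.comp (gaπ k (p ^ r)) = gaCounit k)
    -- the comorphism `φ*` of `φ : 𝔾_{a(r)} → U`:
    (ψ : MvPolynomial ι k →ₐ[k] Polynomial k ⧸ gaI k (p ^ r))
    (hψΔ : (Algebra.TensorProduct.map ψ ψ).comp comul = ΔQ.comp ψ)
    (hψε : εQ.comp ψ = uCounit k ι)
    -- the element `x ∈ P(k)`:
    (x : Pg)
    -- `L` is the lift of `(x ⬝ φ)* = φ* ∘ x*` and `L'` is the lift of `φ*`: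
    (L L' : MvPolynomial ι k →ₐ[k] Polynomial k)
    (hL : ∀ i : ι, L (MvPolynomial.X i) ∈ Polynomial.degreeLT k (p ^ r) ∧
        gaπ k (p ^ r) (L (MvPolynomial.X i)) = (ψ.comp (σ x).toAlgHom) (MvPolynomial.X i))
    (hL' : ∀ i : ι, L' (MvPolynomial.X i) ∈ Polynomial.degreeLT k (p ^ r) ∧
        gaπ k (p ^ r) (L' (MvPolynomial.X i)) = ψ (MvPolynomial.X i)) :
    -- conclusion: `exp^r_U(x ⬝ φ) = x ⬝ exp^r_U(φ)`
    L = L'.comp (σ x).toAlgHom := by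
  classical
  obtain ⟨r, rfl⟩ : ∃ q, r = q + 1 := ⟨r - 1, by omega⟩
  have hsupp := wt_support k ι Λ Tg Pg ιT σ χ root hχadd hχinj hgen
  have hht : ∀ lam, ∀ f ∈ wtSp k ι Λ Tg Pg ιT σ χ lam, ∀ d : ι →₀ ℕ,
      MvPolynomial.coeff d f ≠ 0 →
      - htJ lam = ∑ i ∈ d.support, (d i : ℤ) * htJ (root i) := by
    intro lam f hf d hd
    rw [hsupp lam f hf d hd, map_sum, ← Finset.sum_neg_distrib]
    apply Finset.sum_congr rfl
    intro i _
    simp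
  -- nonnegativity
  have hterm : ∀ (d : ι →₀ ℕ), ∀ i ∈ d.support, 1 ≤ (d i : ℤ) * htJ (root i) := by
    intro d i hi
    have h1 : d i ≠ 0 := Finsupp.mem_support_iff.1 hi
    have h2 : (1 : ℤ) ≤ d i := by exact_mod_cast Nat.one_le_iff_ne_zero.2 h1
    nlinarith [hroot i]
  have hpos0 : ∀ lam, 0 < htJ lam → ∀ f ∈ wtSp k ι Λ Tg Pg ιT σ χ lam, f = 0 := by
    intro lam hl f hf
    ext d
    by_contra hd
    rw [MvPolynomial.coeff_zero] at hd
    have h := hht lam f hf d hd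
    have : 0 ≤ ∑ i ∈ d.support, (d i : ℤ) * htJ (root i) :=
      Finset.sum_nonneg fun i hi => le_trans zero_le_one (hterm d i hi)
    omega
  have hconst : ∀ lam, 0 ≤ htJ lam → ∀ f ∈ wtSp k ι Λ Tg Pg ιT σ χ lam,
      f = MvPolynomial.C (MvPolynomial.coeff 0 f) := by
    intro lam hl f hf
    ext d
    rw [MvPolynomial.coeff_C]
    split_ifs with h0
    · rw [h0]
    · by_contra hd
      have h := hht lam f hf d hd
      obtain ⟨i, hi⟩ := Finsupp.support_nonempty_iff.2 (Ne.symm h0)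
      have h1 := Finset.single_le_sum
        (fun i hi => le_trans zero_le_one (hterm d i hi)) hi
      have h2 := hterm d i hi
      omega
  have hppos : 0 < p ^ r := pow_pos hp.pos r
  have hlt : p ^ r < p ^ (r + 1) := Nat.pow_lt_pow_right hp.one_lt (Nat.lt_succ_self r)
  -- coefficients of constants
  have hcC : ∀ (n : ℕ) (hn : n < p ^ (r + 1)), 0 < n → ∀ c : k,
      cQ k (p ^ (r + 1)) n hn (ψ (MvPolynomial.C c)) = 0 := by
    intro n hn hn0 c
    have h1 : ψ (MvPolynomial.C c) = gaπ k (p ^ (r + 1)) (Polynomial.C c) := by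
      rw [← MvPolynomial.algebraMap_eq, ← Polynomial.algebraMap_eq, AlgHom.commutes,
        AlgHom.commutes]
    rw [h1, cQ_pi, Polynomial.coeff_C, if_neg hn0.ne']
  -- comultiplication identity
  have hΔc : ∀ (a b : ℕ) (ha : a < p ^ (r + 1)) (hb : b < p ^ (r + 1))
      (hab : a + b < p ^ (r + 1)) (q : Polynomial k ⧸ gaI k (p ^ (r + 1))),
      (TensorProduct.lid k k) (TensorProduct.map (cQ k _ a ha) (cQ k _ b hb) (ΔQ q)) =
        ((a + b).choose a : k) * cQ k _ (a + b) hab q := by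
    intro a b ha hb hab q
    obtain ⟨g, rfl⟩ : ∃ g, gaπ k (p ^ (r + 1)) g = q := Ideal.Quotient.mk_surjective q
    have h1 := DFunLike.congr_fun hΔQ g
    simp only [AlgHom.comp_apply] at h1
    rw [h1, cQ_pi, ← coeff_comul]
    congr 1
    have h2 : (TensorProduct.map (cQ k _ a ha) (cQ k _ b hb)) ∘ₗ
        (Algebra.TensorProduct.map (gaπ k (p ^ (r + 1))) (gaπ k (p ^ (r + 1)))).toLinearMap =
        TensorProduct.map (Polynomial.lcoeff k a) (Polynomial.lcoeff k b) := by
      apply TensorProduct.ext'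
      intro u v
      rfl
    exact DFunLike.congr_fun h2 (gaComul k g)
  -- key vanishing
  have key : ∀ (n : ℕ) (hn : n < p ^ (r + 1)) (lam : Λ),
      - htJ lam * (p ^ r : ℕ) < n → ∀ f ∈ wtSp k ι Λ Tg Pg ιT σ χ lam,
      cQ k (p ^ (r + 1)) n hn (ψ f) = 0 := by
    intro n
    induction n using Nat.strong_induction_on with
    | _ n ih =>
    intro hn lam hlam f hf
    rcases Nat.lt_or_ge n (p ^ r) with hnr | hnr
    · rcases Nat.eq_zero_or_pos n with h0 | h0
      · subst h0
        have : 0 < htJ lam := by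
          by_contra hc
          push Not at hc
          have : (0 : ℤ) ≤ - htJ lam * (p ^ r : ℕ) :=
            mul_nonneg (by omega) (by positivity)
          push_cast at *
          omega
        rw [hpos0 lam this f hf, map_zero, map_zero]
      · have : 0 ≤ htJ lam := by
          by_contra hc
          push Not at hc
          have h1 : (1 : ℤ) * (p ^ r : ℕ) ≤ - htJ lam * (p ^ r : ℕ) :=
            mul_le_mul_of_nonneg_right (by omega) (by positivity)
          have h2 : (n : ℤ) < (p ^ r : ℕ) := by exact_mod_cast hnr
          linarith
        rw [hconst lam this f hf]
        exact hcC n hn h0 _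
    · obtain ⟨b, rfl⟩ := Nat.exists_eq_add_of_le hnr
      have hb : b < p ^ (r + 1) := by omega
      have h1 := hΔc (p ^ r) b hlt hb hn (ψ f)
      have hne := choose_ne k p r (p ^ r + b) hp hn hnr
      have h2 := DFunLike.congr_fun hψΔ f
      simp only [AlgHom.comp_apply] at h2
      rw [← h2] at h1
      set M : MvPolynomial ι k ⊗[k] MvPolynomial ι k →ₗ[k] k :=
        (TensorProduct.lid k k).toLinearMap ∘ₗ
          (TensorProduct.map (cQ k _ (p ^ r) hlt) (cQ k _ b hb)) ∘ₗ
          (Algebra.TensorProduct.map ψ ψ).toLinearMap with hM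
      have h3 : M (comul f) = 0 := by
        have hle : (⨆ (pr : Λ × Λ) (_ : pr.1 + pr.2 = lam),
          LinearMap.range (TensorProduct.map
            (wtSp k ι Λ Tg Pg ιT σ χ pr.1).subtype
            (wtSp k ι Λ Tg Pg ιT σ χ pr.2).subtype)) ≤ LinearMap.ker M := by
          refine iSup_le fun pr => iSup_le fun hpr => ?_
          rw [LinearMap.range_le_ker_iff]
          apply TensorProduct.ext'
          rintro ⟨u, hu⟩ ⟨v, hv⟩
          have hMuv : M (u ⊗ₜ v) = cQ k _ (p ^ r) hlt (ψ u) * cQ k _ b hb (ψ v) := rfl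
          change M (u ⊗ₜ v) = 0
          rw [hMuv]
          rcases le_or_gt 0 (htJ pr.1) with h0 | h0
          · rw [hconst _ h0 u hu, hcC _ hlt hppos, zero_mul]
          · have hv0 : cQ k _ b hb (ψ v) = 0 := by
              refine ih b (by omega) hb pr.2 ?_ v hv
              have h5 : htJ lam = htJ pr.1 + htJ pr.2 := by rw [← hpr, map_add]
              have h6 : - htJ pr.2 * (p ^ r : ℕ) ≤ (- htJ lam - 1) * (p ^ r : ℕ) :=
                mul_le_mul_of_nonneg_right (by omega) (by positivity)
              rw [Nat.cast_add] at hlam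
              linarith
            rw [hv0, mul_zero]
        exact hle (hwt lam f hf)
      have h4 : M (comul f) = (((p ^ r + b).choose (p ^ r) : ℕ) : k) *
        cQ k _ (p ^ r + b) hn (ψ f) := h1
      rw [h3] at h4
      exact (mul_eq_zero.1 h4.symm).resolve_left hne
  -- degree bound for generators
  have hdeg : ∀ i, ((L' (MvPolynomial.X i)).natDegree : ℤ) ≤ htJ (root i) * (p ^ r : ℕ) := by
    intro i
    by_contra hc
    push Not at hc
    have hc0 : 0 < (L' (MvPolynomial.X i)).natDegree := by
      have : (0 : ℤ) ≤ htJ (root i) * (p ^ r : ℕ) :=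
        mul_nonneg (by linarith [hroot i]) (by positivity)
      omega
    have hne : L' (MvPolynomial.X i) ≠ 0 := by
      intro h; rw [h] at hc0; simp at hc0
    have hn : (L' (MvPolynomial.X i)).natDegree < p ^ (r + 1) := by
      rw [Polynomial.natDegree_lt_iff_degree_lt hne]
      exact Polynomial.mem_degreeLT.1 (hL' i).1
    have h1 := key _ hn (- root i) (by rwa [map_neg, neg_neg]) _ (hXwt i)
    rw [← (hL' i).2, cQ_pi, Polynomial.coeff_natDegree] at h1
    exact hne (Polynomial.leadingCoeff_eq_zero.1 h1)
  -- degree bound on weight spaces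
  have hdegwt : ∀ lam, - htJ lam < (p : ℤ) → ∀ f ∈ wtSp k ι Λ Tg Pg ιT σ χ lam,
      L' f ∈ Polynomial.degreeLT k (p ^ (r + 1)) := by
    intro lam hlam f hf
    rw [f.as_sum, map_sum]
    refine Submodule.sum_mem _ fun d hd => ?_
    have h := hht lam f hf d (MvPolynomial.mem_support_iff.1 hd)
    rw [MvPolynomial.monomial_eq, map_mul, ← MvPolynomial.algebraMap_eq, AlgHom.commutes,
      ← Algebra.smul_def]
    refine Submodule.smul_mem _ _ ?_
    rw [Finsupp.prod, map_prod, Polynomial.mem_degreeLT]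
    refine lt_of_le_of_lt Polynomial.degree_le_natDegree ?_
    rw [Nat.cast_lt]
    refine lt_of_le_of_lt (Polynomial.natDegree_prod_le _ _) ?_
    have h1 : ((∑ i ∈ d.support, (L' (MvPolynomial.X i ^ d i)).natDegree : ℕ) : ℤ) ≤
        ∑ i ∈ d.support, (d i : ℤ) * htJ (root i) * (p ^ r : ℕ) := by
      rw [Nat.cast_sum]
      apply Finset.sum_le_sum
      intro i _
      rw [map_pow, Polynomial.natDegree_pow, Nat.cast_mul, mul_assoc]
      exact mul_le_mul_of_nonneg_left (hdeg i) (by positivity)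
    rw [← Finset.sum_mul, ← h] at h1
    have h2 : - htJ lam * (p ^ r : ℕ) < (p : ℤ) * (p ^ r : ℕ) :=
      mul_lt_mul_of_pos_right hlam (by exact_mod_cast hppos)
    have h3 : ((p ^ (r + 1) : ℕ) : ℤ) = (p : ℤ) * (p ^ r : ℕ) := by
      push_cast; ring
    have h4 := lt_of_le_of_lt h1 h2
    rw [← h3] at h4
    exact_mod_cast h4
  -- stability of the filtration
  have hstab : ∀ (m : ℤ) (g : Pg),
      ∀ f ∈ (⨆ (lam : Λ) (_ : m ≤ htJ lam), wtSp k ι Λ Tg Pg ιT σ χ lam),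
      σ g f ∈ (⨆ (lam : Λ) (_ : m ≤ htJ lam), wtSp k ι Λ Tg Pg ιT σ χ lam) := by
    intro m g
    set F := (⨆ (lam : Λ) (_ : m ≤ htJ lam), wtSp k ι Λ Tg Pg ιT σ χ lam) with hF
    have hmem : ∀ lam, m ≤ htJ lam → wtSp k ι Λ Tg Pg ιT σ χ lam ≤ F := fun lam hl =>
      le_iSup₂_of_le lam hl le_rfl
    have hbase : ∀ g ∈ (Set.range ⇑ιT ∪ ⋃ j, uelt j), F ≤ F.comap (σ g).toLinearMap := by
      intro g hg
      conv_lhs => rw [hF]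
      refine iSup₂_le fun lam hl f hf => ?_
      change σ g f ∈ F
      rcases hg with ⟨s, rfl⟩ | hg
      · rw [hf s]
        exact F.smul_mem _ (hmem lam hl hf)
      · obtain ⟨j, hj⟩ := Set.mem_iUnion.1 hg
        have hle : (⨆ c : ℕ, wtSp k ι Λ Tg Pg ιT σ χ (lam + c • proot j)) ≤ F := ?_
        · exact hle (hU j g hj lam f hf)
        refine iSup_le fun c : ℕ => ?_
        apply hmem
        rw [map_add, map_nsmul, nsmul_eq_mul]
        have := mul_nonneg (Int.natCast_nonneg c) (hproot j)
        linarith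
    have hg : g ∈ Subgroup.closure (Set.range ⇑ιT ∪ ⋃ j, uelt j) := by
      rw [hPgen]; trivial
    induction hg using Subgroup.closure_induction'' with
    | mem g hg => exact fun f hf => hbase g hg hf
    | inv_mem g hg =>
      refine fun f hf => hbase g⁻¹ ?_ hf
      rcases hg with ⟨s, rfl⟩ | hg
      · exact Or.inl ⟨s⁻¹, map_inv _ _⟩
      · obtain ⟨j, hj⟩ := Set.mem_iUnion.1 hg
        exact Or.inr (Set.mem_iUnion.2 ⟨j, huinv j g hj⟩)
    | one => intro f hf; rw [map_one]; exact hf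
    | mul a b _ _ iha ihb =>
      intro f hf
      rw [map_mul]
      exact iha _ (ihb f hf)
  -- projection of the lift
  have hproj : (gaπ k (p ^ (r + 1))).comp L' = ψ :=
    MvPolynomial.algHom_ext fun i => (hL' i).2
  apply MvPolynomial.algHom_ext
  intro i
  have hmem : (L'.comp (σ x).toAlgHom) (MvPolynomial.X i) ∈
      Polynomial.degreeLT k (p ^ (r + 1)) := by
    have h1 := hstab (- htJ (root i)) x (MvPolynomial.X i)
      (le_iSup₂_of_le (f := fun (lam : Λ) (_ : - htJ (root i) ≤ htJ lam) =>
        wtSp k ι Λ Tg Pg ιT σ χ lam) (- root i) (by rw [map_neg]) le_rfl (hXwt i))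
    have h2 : (⨆ (lam : Λ) (_ : - htJ (root i) ≤ htJ lam), wtSp k ι Λ Tg Pg ιT σ χ lam) ≤
        (Polynomial.degreeLT k (p ^ (r + 1))).comap L'.toLinearMap :=
      iSup₂_le fun lam hl f hf => hdegwt lam (by linarith [hnil i]) f hf
    exact h2 h1
  have hpr : gaπ k (p ^ (r + 1)) ((L'.comp (σ x).toAlgHom) (MvPolynomial.X i)) =
      gaπ k (p ^ (r + 1)) (L (MvPolynomial.X i)) := by
    rw [(hL i).2, ← hproj]
    rfl
  ext n
  rcases Nat.lt_or_ge n (p ^ (r + 1)) with hn | hn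
  · rw [← cQ_pi k _ n hn, ← cQ_pi k _ n hn, hpr]
  · rw [Polynomial.coeff_eq_zero_of_degree_lt, Polynomial.coeff_eq_zero_of_degree_lt]
    · exact lt_of_lt_of_le (Polynomial.mem_degreeLT.1 hmem) (by exact_mod_cast hn)
    · exact lt_of_lt_of_le (Polynomial.mem_degreeLT.1 (hL i).1) (by exact_mod_cast hn)

end Stmt10
end
end
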